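/- There exists a constant C > 0 such that for every bicolored point set S of n ≥ 2 points in the plane in general position containing at least one red and at least one blue point, there exists a plane bichromatic spanning tree of S whose total length is at most C·(1 + log₂ n) times the length of a minimum bichromatic spanning tree of S. In particular, the length of a minimum plane bichromatic spanning tree of S is at most O(log n) times the length of a minimum bichromatic spanning tree of S. -/

import Mathlib

open scoped Classical

noncomputable section

/-- Points in the Euclidean plane. -/
abbrev Pt : Type := EuclideanSpace ℝ (Fin 2)

/-- `S` is in general position: no three (distinct) points of `S` are collinear. -/
def GenPos (S : Finset Pt) : Prop :=
  ∀ p ∈ S, ∀ q ∈ S, ∀ r ∈ S, p ≠ q → p ≠ r → q ≠ r →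
    ¬ Collinear ℝ ({p, q, r} : Set Pt)

/-- The closed segments `[a,b]` and `[c,d]` cross: they share a point that is
interior to both segments. -/
def SegCross (a b c d : Pt) : Prop :=
  ∃ p : Pt, p ∈ openSegment ℝ a b ∧ p ∈ openSegment ℝ c d

/-- Two unordered edges (over vertices lying in the plane) cross. -/
def EdgeCross {S : Finset Pt} (e₁ e₂ : Sym2 ↥S) : Prop :=
  ∃ a b c d : ↥S, e₁ = s(a, b) ∧ e₂ = s(c, d) ∧ SegCross ↑a ↑b ↑c ↑d

/-- A (straight-line drawn) graph is plane if no two of its edges cross. -/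
def PlaneGraph {S : Finset Pt} (G : SimpleGraph ↥S) : Prop :=
  ∀ e₁ ∈ G.edgeSet, ∀ e₂ ∈ G.edgeSet, e₁ ≠ e₂ → ¬ EdgeCross e₁ e₂

/-- Every edge has one red (`true`) and one blue (`false`) endpoint. -/
def Bichromatic {S : Finset Pt} (col : Pt → Bool) (G : SimpleGraph ↥S) : Prop :=
  ∀ u v : ↥S, G.Adj u v → col ↑u ≠ col ↑v

/-- The Euclidean length of an unordered edge. -/
def edgeLen {S : Finset Pt} : Sym2 ↥S → ℝ :=
  Sym2.lift ⟨fun a b => dist (a : Pt) (b : Pt), fun _ _ => dist_comm _ _⟩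

/-- The total Euclidean length of the edges of a graph drawn with straight-line edges. -/
def graphLen {S : Finset Pt} (G : SimpleGraph ↥S) : ℝ :=
  ∑ᶠ e ∈ G.edgeSet, edgeLen e

/-- A bichromatic spanning tree of `S`. -/
def IsBST {S : Finset Pt} (col : Pt → Bool) (G : SimpleGraph ↥S) : Prop :=
  G.IsTree ∧ Bichromatic col G

/-- A minimum bichromatic spanning tree of `S`. -/
def IsMinBST {S : Finset Pt} (col : Pt → Bool) (G : SimpleGraph ↥S) : Prop :=
  IsBST col G ∧ ∀ G' : SimpleGraph ↥S, IsBST col G' → graphLen G ≤ graphLen G'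

/-! ### Vertical visibility among non-crossing segments -/

/-- The height at abscissa `x` of the line through `(X a, H a)` and `(X b, H b)`. -/
def lineHeight {ι : Type*} (X H : ι → ℝ) (a b : ι) (x : ℝ) : ℝ :=
  H a + (H b - H a) / (X b - X a) * (x - X a)

lemma lineHeight_left {ι : Type*} (X H : ι → ℝ) (a b : ι) : lineHeight X H a b (X a) = H a := by
  simp [lineHeight]

lemma lineHeight_right {ι : Type*} (X H : ι → ℝ) {a b : ι} (h : X a < X b) :
    lineHeight X H a b (X b) = H b := by
  have : X b - X a ≠ 0 := by linarith
  unfold lineHeight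
  field_simp
  ring

/-- Among finitely many properly coloured non-crossing segments without isolated endpoints, some
endpoint of each colour `γ` is visible from vertical infinity. -/
lemma exists_visible_from_above {ι : Type*} (V : Finset ι) (X H : ι → ℝ) (adj : ι → ι → Prop)
    (c : ι → Bool) (γ : Bool) (hV : V.Nonempty) (hX : Set.InjOn X V)
    (hmem : ∀ a b, adj a b → a ∈ V ∧ b ∈ V) (hsymm : ∀ a b, adj a b → adj b a)
    (hc : ∀ a b, adj a b → c a ≠ c b) (hnbr : ∀ v ∈ V, ∃ w, adj v w)
    (hgen : ∀ a b w, adj a b → w ∈ V → X a < X w → X w < X b → H w ≠ lineHeight X H a b (X w))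
    (hnc : ∀ a b a' b', adj a b → adj a' b' → X a < X b → X a' < X b' → ∀ x y : ℝ, x < y →
      X a ≤ x → X a' ≤ x → y ≤ X b → y ≤ X b' →
      lineHeight X H a b x < lineHeight X H a' b' x →
      lineHeight X H a' b' y < lineHeight X H a b y → False) :
    ∃ p ∈ V, c p = γ ∧
      ∀ a b, adj a b → X a < X p → X p < X b → lineHeight X H a b (X p) < H p := by
  by_contra hno
  push Not at hno
  set vis : ι → Prop := fun p =>
    ∀ a b, adj a b → X a < X p → X p < X b → lineHeight X H a b (X p) < H p with hvis
  have hno' : ∀ p ∈ V, vis p → c p ≠ γ := by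
    intro p hp hv hcp
    obtain ⟨a, b, hab, h1, h2, h3⟩ := hno p hp hcp
    exact absurd (hv a b hab h1 h2) (not_lt.mpr h3)
  have hne : ∀ a b, adj a b → X a ≠ X b := by
    intro a b hab h
    have := hX (hmem a b hab).1 (hmem a b hab).2 h
    exact hc a b hab (by rw [this])
  set R : Finset ι := V.filter (fun v => vis v ∧ ∃ b, adj v b ∧ X v < X b) with hR
  have hRne : R.Nonempty := by
    obtain ⟨v, hv, hmin⟩ := V.exists_min_image X hV
    refine ⟨v, Finset.mem_filter.mpr ⟨hv, ?_, ?_⟩⟩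
    · intro a b hab h1 _
      exact absurd h1 (not_lt.mpr (hmin a (hmem a b hab).1))
    · obtain ⟨w, hw⟩ := hnbr v hv
      exact ⟨w, hw, lt_of_le_of_ne (hmin w (hmem v w hw).2) (hne v w hw)⟩
  obtain ⟨v, hvR, hvmax⟩ := R.exists_max_image X hRne
  obtain ⟨hvV, hvvis, b₀, hb₀, hb₀X⟩ := Finset.mem_filter.mp hvR
  obtain ⟨b, hbB, hbmax⟩ := (V.filter (fun b => adj v b ∧ X v < X b)).exists_max_image
    (fun b => (H b - H v) / (X b - X v)) ⟨b₀, Finset.mem_filter.mpr ⟨(hmem _ _ hb₀).2, hb₀, hb₀X⟩⟩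
  obtain ⟨hbV, hvb, hvbX⟩ := Finset.mem_filter.mp hbB
  have key : ∀ u u' x, adj u u' → X v < x → x ≤ X b → X u < x → x ≤ X u' →
      lineHeight X H v b x < lineHeight X H u u' x →
      X v < X u ∧ X u < X b ∧ lineHeight X H v b (X u) < H u := by
    intro u u' x huu h1 h2 h3 h4 h5
    have huu' : X u < X u' := lt_of_lt_of_le h3 h4
    have huV := (hmem _ _ huu).1
    rcases lt_trichotomy (X u) (X v) with h | h | h
    · exfalso
      have := hvvis u u' huu h (lt_of_lt_of_le h1 h4)
      refine hnc u u' v b huu hvb huu' hvbX (X v) x h1 h.le le_rfl h4 h2 ?_ h5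
      rwa [lineHeight_left]
    · exfalso
      have huv := hX huV hvV h
      subst huv
      have := hbmax u' (Finset.mem_filter.mpr ⟨(hmem _ _ huu).2, huu, huu'⟩)
      unfold lineHeight at h5
      have := mul_le_mul_of_nonneg_right this (by linarith : 0 ≤ x - X u)
      linarith
    · refine ⟨h, lt_of_lt_of_le h3 h2, ?_⟩
      by_contra hlt
      have hneq := hgen v b u hvb huV h (lt_of_lt_of_le h3 h2)
      have hlt' : H u < lineHeight X H v b (X u) := lt_of_le_of_ne (not_lt.mp hlt) hneq
      refine hnc u u' v b huu hvb huu' hvbX (X u) x h3 le_rfl h.le h4 h2 ?_ h5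
      rwa [lineHeight_left]
  have hvγ := hno' v hvV hvvis
  have hbγ : c b = γ := by
    have := hc v b hvb
    revert this hvγ
    cases c v <;> cases c b <;> cases γ <;> simp
  set W : Finset ι := V.filter
    (fun w => X v < X w ∧ X w < X b ∧ lineHeight X H v b (X w) < H w) with hW
  have hWne : W.Nonempty := by
    obtain ⟨a', b', hab, h1, h2, h3⟩ := hno b hbV hbγ
    have h4 := lt_of_le_of_ne h3 (hgen a' b' b hab hbV h1 h2)
    rw [← lineHeight_right X H hvbX] at h4
    exact ⟨a', Finset.mem_filter.mpr
      ⟨(hmem _ _ hab).1, key a' b' (X b) hab hvbX le_rfl h1 h2.le h4⟩⟩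
  obtain ⟨w, hwW, hwmin⟩ := W.exists_min_image X hWne
  obtain ⟨hwV, hvw, hwb, hwH⟩ := Finset.mem_filter.mp hwW
  have hwvis : vis w := by
    intro a b' hab h1 h2
    by_contra h3
    have hk := key a b' (X w) hab hvw hwb.le h1 h2.le (lt_of_lt_of_le hwH (not_lt.mp h3))
    exact absurd h1 (not_lt.mpr (hwmin a (Finset.mem_filter.mpr ⟨(hmem _ _ hab).1, hk⟩)))
  obtain ⟨w', hww'⟩ := hnbr w hwV
  have hw'X : X w < X w' := by
    refine lt_of_le_of_ne ?_ (hne _ _ hww')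
    by_contra h
    push Not at h
    have hk := key w' w (X w) (hsymm _ _ hww') hvw hwb.le h le_rfl
      (by rwa [lineHeight_right X H h])
    exact absurd h (not_lt.mpr (hwmin w' (Finset.mem_filter.mpr ⟨(hmem _ _ hww').2, hk⟩)))
  exact absurd hvw (not_lt.mpr (hvmax w
    (Finset.mem_filter.mpr ⟨hwV, hwvis, w', hww', hw'X⟩)))

/-! ### Visibility of a vertex from a point outside the convex hull -/

lemma collinear_of_cross_eq {a b c : Pt}
    (h : (b 0 - a 0) * (c 1 - a 1) = (b 1 - a 1) * (c 0 - a 0)) :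
    Collinear ℝ ({a, b, c} : Set Pt) := by
  rcases eq_or_ne a b with rfl | hab
  · simpa using collinear_pair ℝ a c
  rw [collinear_iff_of_mem (p₀ := a) (by simp)]
  refine ⟨b - a, ?_⟩
  intro p hp
  simp only [Set.mem_insert_iff, Set.mem_singleton_iff] at hp
  rcases hp with rfl | rfl | rfl
  · exact ⟨0, by simp⟩
  · exact ⟨1, by simp⟩
  · by_cases h0 : b 0 - a 0 = 0
    · have h1 : b 1 - a 1 ≠ 0 := by
        intro h1
        apply hab
        ext i
        fin_cases i
        · simp only [Fin.zero_eta]; linarith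
        · simp only [Fin.mk_one]; linarith
      refine ⟨(p 1 - a 1) / (b 1 - a 1), ?_⟩
      have h2 : p 0 - a 0 = 0 := by
        rw [h0, zero_mul] at h
        exact (mul_eq_zero.mp h.symm).resolve_left h1
      ext i
      fin_cases i
      · simp [h0]; linarith
      · simp; field_simp; ring
    · refine ⟨(p 0 - a 0) / (b 0 - a 0), ?_⟩
      ext i
      fin_cases i
      · simp; field_simp; ring
      · simp; field_simp; linarith

lemma collinear_of_mem_openSegment {a b w : Pt} (h : w ∈ openSegment ℝ a b) :
    Collinear ℝ ({a, w, b} : Set Pt) :=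
  (mem_segment_iff_wbtw.mp (openSegment_subset_segment ℝ a b h)).collinear

/-- A set of red-blue edges on `A` which is plane, and connected as a graph on `A`. Edges are
stored with their red endpoint first. -/
structure PlaneConnected (col : Pt → Bool) (A : Finset Pt) (E : Finset (Pt × Pt)) : Prop where
  mem : ∀ e ∈ E, e.1 ∈ A ∧ e.2 ∈ A
  red : ∀ e ∈ E, col e.1 = true
  blue : ∀ e ∈ E, col e.2 = false
  plane : ∀ e ∈ E, ∀ e' ∈ E, e ≠ e' → ¬ SegCross e.1 e.2 e'.1 e'.2
  conn : ∀ p ∈ A, ∀ q ∈ A, Relation.EqvGen (fun a b => (a, b) ∈ E) p q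

/-- Both colours occur in `A`. -/
def TwoColored (col : Pt → Bool) (A : Finset Pt) : Prop :=
  (∃ r ∈ A, col r = true) ∧ ∃ b ∈ A, col b = false

lemma TwoColored.exists_color_eq {col : Pt → Bool} {A : Finset Pt} (h : TwoColored col A)
    (γ : Bool) : ∃ p ∈ A, col p = γ := by
  cases γ
  · exact h.2
  · exact h.1

lemma eqvGen_eq_or_incident {ι : Type*} {R : ι → ι → Prop} {a b : ι} (h : Relation.EqvGen R a b) :
    a = b ∨ ((∃ c, R a c ∨ R c a) ∧ ∃ c, R b c ∨ R c b) := by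
  induction h with
  | rel x y h => exact Or.inr ⟨⟨y, Or.inl h⟩, ⟨x, Or.inr h⟩⟩
  | refl x => exact Or.inl rfl
  | symm x y _ ih => exact ih.elim (fun h => Or.inl h.symm) (fun h => Or.inr h.symm)
  | trans x y z _ _ ih₁ ih₂ =>
    rcases ih₁ with rfl | h₁
    · exact ih₂
    · rcases ih₂ with rfl | h₂
      · exact Or.inr h₁
      · exact Or.inr ⟨h₁.1, h₂.2⟩

lemma PlaneConnected.exists_incident {col : Pt → Bool} {A : Finset Pt} {E : Finset (Pt × Pt)}
    (hE : PlaneConnected col A E) (hA : TwoColored col A) {v : Pt} (hv : v ∈ A) :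
    ∃ w, (v, w) ∈ E ∨ (w, v) ∈ E := by
  obtain ⟨p, hp, hpc⟩ := hA.exists_color_eq (!col v)
  rcases eqvGen_eq_or_incident (hE.conn v hv p hp) with rfl | h
  · simp at hpc
  · exact h.1

lemma segCross_swap_right {a b c d : Pt} (h : SegCross a b c d) : SegCross a b d c := by
  unfold SegCross at *
  rwa [openSegment_symm ℝ d c]

lemma segCross_swap_left {a b c d : Pt} (h : SegCross a b c d) : SegCross b a c d := by
  unfold SegCross at *
  rwa [openSegment_symm ℝ b a]

lemma segCross_comm {a b c d : Pt} (h : SegCross a b c d) : SegCross c d a b := by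
  obtain ⟨p, h₁, h₂⟩ := h
  exact ⟨p, h₂, h₁⟩

/-- The distance of `v` behind `q` in the direction `(α, β)`, up to scaling. -/
def sightDepth (α β : ℝ) (q v : Pt) : ℝ := α * (q 0 - v 0) + β * (q 1 - v 1)

/-- The coordinate of `v` relative to `q` orthogonal to `(α, β)`, up to scaling. -/
def sightOffset (α β : ℝ) (q v : Pt) : ℝ := α * (q 1 - v 1) - β * (q 0 - v 0)

/-- The slope of the ray from `q` to `v`. -/
def sightSlope (α β : ℝ) (q v : Pt) : ℝ := sightOffset α β q v / sightDepth α β q v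

lemma eq_of_sight_eq {α β : ℝ} (hαβ : α ^ 2 + β ^ 2 ≠ 0) {q v w : Pt}
    (h₁ : sightDepth α β q v = sightDepth α β q w)
    (h₂ : sightOffset α β q v = sightOffset α β q w) : v = w := by
  unfold sightDepth at h₁
  unfold sightOffset at h₂
  ext i
  fin_cases i
  · simp only [Fin.zero_eta]
    apply mul_left_cancel₀ hαβ
    linear_combination (-α) * h₁ + β * h₂
  · simp only [Fin.mk_one]
    apply mul_left_cancel₀ hαβ
    linear_combination (-β) * h₁ - α * h₂

lemma sightDepth_comb {α β s t : ℝ} (h : s + t = 1) (q v w : Pt) :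
    sightDepth α β q (s • v + t • w) = s * sightDepth α β q v + t * sightDepth α β q w := by
  simp only [sightDepth, PiLp.add_apply, PiLp.smul_apply, smul_eq_mul]
  linear_combination (-(α * q 0 + β * q 1)) * h

lemma sightOffset_comb {α β s t : ℝ} (h : s + t = 1) (q v w : Pt) :
    sightOffset α β q (s • v + t • w) = s * sightOffset α β q v + t * sightOffset α β q w := by
  simp only [sightOffset, PiLp.add_apply, PiLp.smul_apply, smul_eq_mul]
  linear_combination (-(α * q 1 - β * q 0)) * h

lemma mem_openSegment_of_lineHeight {α β : ℝ} (hαβ : α ^ 2 + β ^ 2 ≠ 0) {q a b P : Pt}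
    (ha : 0 < sightDepth α β q a) (hb : 0 < sightDepth α β q b) (hP : 0 < sightDepth α β q P)
    (h₁ : sightSlope α β q a < sightSlope α β q P) (h₂ : sightSlope α β q P < sightSlope α β q b)
    (h : lineHeight (sightSlope α β q) (fun v => (sightDepth α β q v)⁻¹) a b
      (sightSlope α β q P) = (sightDepth α β q P)⁻¹) : P ∈ openSegment ℝ a b := by
  have ea : sightOffset α β q a = sightSlope α β q a * sightDepth α β q a := by
    unfold sightSlope; field_simp
  have eb : sightOffset α β q b = sightSlope α β q b * sightDepth α β q b := by
    unfold sightSlope; field_simp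
  have eP : sightOffset α β q P = sightSlope α β q P * sightDepth α β q P := by
    unfold sightSlope; field_simp
  set xa := sightSlope α β q a
  set xb := sightSlope α β q b
  set x := sightSlope α β q P
  set ga := sightDepth α β q a
  set gb := sightDepth α β q b
  set g := sightDepth α β q P
  have hba : 0 < xb - xa := by linarith
  have hba' := hba.ne'
  change ga⁻¹ + (gb⁻¹ - ga⁻¹) / (xb - xa) * (x - xa) = g⁻¹ at h
  set t := (x - xa) / (xb - xa) with ht
  have ht0 : 0 < t := div_pos (by linarith) hba
  have ht1 : t < 1 := by rw [ht, div_lt_one hba]; linarith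
  have hx : x = (1 - t) * xa + t * xb := by rw [ht]; field_simp; ring
  have hh : ((1 - t) * ga⁻¹ + t * gb⁻¹) * g = 1 := by
    have : (1 - t) * ga⁻¹ + t * gb⁻¹ = g⁻¹ := by
      rw [← h, ht]; field_simp; ring
    rw [this, inv_mul_cancel₀ hP.ne']
  have hs : (1 - t) * ga⁻¹ * g + t * gb⁻¹ * g = 1 := by linear_combination hh
  refine ⟨(1 - t) * ga⁻¹ * g, t * gb⁻¹ * g, ?_, ?_, hs, ?_⟩
  · have := sub_pos.mpr ht1
    positivity
  · positivity
  · apply eq_of_sight_eq hαβ (q := q)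
    · rw [sightDepth_comb hs]
      change _ * ga + _ * gb = g
      field_simp
      ring
    · rw [sightOffset_comb hs, ea, eb, eP, hx]
      field_simp

/-- The converse of `mem_openSegment_of_lineHeight`. -/
lemma lineHeight_of_mem_openSegment {α β : ℝ} {q a b P : Pt}
    (ha : 0 < sightDepth α β q a) (hb : 0 < sightDepth α β q b)
    (hab : sightSlope α β q a < sightSlope α β q b) (hP : P ∈ openSegment ℝ a b) :
    sightSlope α β q a < sightSlope α β q P ∧ sightSlope α β q P < sightSlope α β q b ∧
    lineHeight (sightSlope α β q) (fun v => (sightDepth α β q v)⁻¹) a b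
      (sightSlope α β q P) = (sightDepth α β q P)⁻¹ := by
  obtain ⟨s, t, hs, ht, hst, rfl⟩ := hP
  have ea : sightOffset α β q a = sightSlope α β q a * sightDepth α β q a := by
    unfold sightSlope; field_simp
  have eb : sightOffset α β q b = sightSlope α β q b * sightDepth α β q b := by
    unfold sightSlope; field_simp
  have eP : sightSlope α β q (s • a + t • b) =
      (s * (sightSlope α β q a * sightDepth α β q a) +
        t * (sightSlope α β q b * sightDepth α β q b)) /
      (s * sightDepth α β q a + t * sightDepth α β q b) := by
    rw [← ea, ← eb, ← sightDepth_comb hst, ← sightOffset_comb hst]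
    rfl
  rw [eP, sightDepth_comb hst]
  set xa := sightSlope α β q a
  set xb := sightSlope α β q b
  set ga := sightDepth α β q a
  set gb := sightDepth α β q b
  have hg : 0 < s * ga + t * gb := by positivity
  have hba : 0 < xb - xa := by linarith
  have h₁ : 0 < s * ga * (xb - xa) := by positivity
  have h₂ : 0 < t * gb * (xb - xa) := by positivity
  refine ⟨?_, ?_, ?_⟩
  · rw [lt_div_iff₀ hg]; nlinarith
  · rw [div_lt_iff₀ hg]; nlinarith
  · unfold lineHeight
    change ga⁻¹ + (gb⁻¹ - ga⁻¹) / (xb - xa) * (_ - xa) = _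
    have e : (s * (xa * ga) + t * (xb * gb)) / (s * ga + t * gb) - xa =
        t * gb * (xb - xa) / (s * ga + t * gb) := by
      field_simp; ring
    rw [e]
    have := hba.ne'
    have h' : s = 1 - t := by linarith
    field_simp
    rw [h']
    ring

lemma exists_crossing_of_lineHeight {ι : Type*} (X H : ι → ℝ) {a b a' b' : ι} {x y : ℝ}
    (hxy : x < y) (hx : lineHeight X H a b x < lineHeight X H a' b' x)
    (hy : lineHeight X H a' b' y < lineHeight X H a b y) :
    ∃ z, x < z ∧ z < y ∧ lineHeight X H a b z = lineHeight X H a' b' z := by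
  have hcont : ∀ c d, Continuous (lineHeight X H c d) := by
    intro c d
    unfold lineHeight
    fun_prop
  obtain ⟨z, hz, hz'⟩ := intermediate_value_Ioo hxy.le
    (f := fun z => lineHeight X H a b z - lineHeight X H a' b' z)
    (((hcont a b).sub (hcont a' b')).continuousOn)
    (show (0 : ℝ) ∈ Set.Ioo _ _ from ⟨by linarith, by linarith⟩)
  exact ⟨z, hz.1, hz.2, by simpa [sub_eq_zero] using hz'⟩

lemma lineHeight_pos {ι : Type*} {X H : ι → ℝ} {a b : ι} {x : ℝ} (ha : 0 < H a) (hb : 0 < H b)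
    (h₁ : X a < x) (h₂ : x < X b) : 0 < lineHeight X H a b x := by
  have hba : 0 < X b - X a := by linarith
  have : lineHeight X H a b x =
      (H a * (X b - x) + H b * (x - X a)) / (X b - X a) := by
    unfold lineHeight
    have := hba.ne'
    field_simp
    ring
  rw [this]
  have := sub_pos.mpr h₁
  have := sub_pos.mpr h₂
  positivity

/-- A point strictly separated from the vertex set of a plane connected red-blue graph sees a vertex
of each colour. -/
lemma PlaneConnected.exists_visible {col : Pt → Bool} {A : Finset Pt} {E : Finset (Pt × Pt)}
    (hE : PlaneConnected col A E) (hA : TwoColored col A) {q : Pt} (hgen : GenPos (insert q A))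
    {α β : ℝ} (hsep : ∀ a ∈ A, α * a 0 + β * a 1 < α * q 0 + β * q 1) (γ : Bool) :
    ∃ p ∈ A, col p = γ ∧ ∀ e ∈ E, ¬ SegCross q p e.1 e.2 := by
  have hdep : ∀ a ∈ A, 0 < sightDepth α β q a := by
    intro a ha
    have := hsep a ha
    unfold sightDepth
    linarith
  obtain ⟨a₀, ha₀, -⟩ := hA.1
  have hqA : q ∉ A := fun h => lt_irrefl _ (hsep q h)
  have hqne : ∀ a ∈ A, q ≠ a := fun a ha h => hqA (h ▸ ha)
  have hαβ : α ^ 2 + β ^ 2 ≠ 0 := by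
    intro h
    have h1 : α = 0 := by nlinarith [sq_nonneg α, sq_nonneg β]
    have h2 : β = 0 := by nlinarith [sq_nonneg α, sq_nonneg β]
    have := hsep a₀ ha₀
    simp [h1, h2] at this
  have hinj : Set.InjOn (sightSlope α β q) A := by
    intro a ha b hb hab
    by_contra hne
    refine hgen q (by simp) a (by simp [Finset.mem_coe.mp ha]) b (by simp [Finset.mem_coe.mp hb])
      (hqne a ha) (hqne b hb) hne ?_
    apply collinear_of_cross_eq
    have h1 := hdep a ha
    have h2 := hdep b hb
    unfold sightSlope at hab
    rw [div_eq_div_iff h1.ne' h2.ne'] at hab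
    unfold sightDepth sightOffset at hab
    apply mul_left_cancel₀ hαβ
    linear_combination -hab
  have hgen' : ∀ a ∈ A, ∀ b ∈ A, ∀ w ∈ A, a ≠ b → a ≠ w → b ≠ w → w ∉ openSegment ℝ a b := by
    intro a ha b hb w hw h1 h2 h3 h
    exact hgen a (by simp [ha]) w (by simp [hw]) b (by simp [hb]) h2 h1 h3.symm
      (collinear_of_mem_openSegment h)
  set X := sightSlope α β q with hXdef
  set H : Pt → ℝ := fun v => (sightDepth α β q v)⁻¹ with hHdef
  have hHpos : ∀ a ∈ A, 0 < H a := fun a ha => inv_pos.mpr (hdep a ha)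
  set adj : Pt → Pt → Prop := fun a b => (a, b) ∈ E ∨ (b, a) ∈ E with hadj
  have hmem : ∀ a b, adj a b → a ∈ A ∧ b ∈ A := by
    rintro a b (h | h)
    · exact hE.mem _ h
    · exact (hE.mem _ h).symm
  have hcross : ∀ a b a' b', adj a b → adj a' b' → s(a, b) ≠ s(a', b') → ¬ SegCross a b a' b' := by
    rintro a b a' b' (h | h) (h' | h') hne hcr
    · exact hE.plane _ h _ h' (fun he => hne (by rw [Prod.mk.injEq] at he; simp [he.1, he.2])) hcr
    · exact hE.plane _ h _ h' (fun he => hne (by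
        rw [Prod.mk.injEq] at he; simp [he.1, he.2])) (segCross_swap_right hcr)
    · exact hE.plane _ h _ h' (fun he => hne (by
        rw [Prod.mk.injEq] at he; simp [he.1, he.2])) (segCross_swap_left hcr)
    · exact hE.plane _ h _ h' (fun he => hne (by
        rw [Prod.mk.injEq] at he; simp [he.1, he.2]))
        (segCross_swap_left (segCross_swap_right hcr))
  obtain ⟨p, hpA, hpc, hpvis⟩ := exists_visible_from_above A X H adj col γ ⟨a₀, ha₀⟩ hinj hmem
    (fun a b h => Or.symm h)
    (by
      rintro a b (h | h)
      · have h1 := hE.red _ h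
        have h2 := hE.blue _ h
        simp_all
      · have h1 := hE.red _ h
        have h2 := hE.blue _ h
        simp_all)
    (fun v hv => hE.exists_incident hA hv)
    (by
      intro a b w hab hw h1 h2 h3
      have ⟨ha, hb⟩ := hmem a b hab
      refine hgen' a ha b hb w hw ?_ ?_ ?_ (mem_openSegment_of_lineHeight hαβ (hdep a ha)
        (hdep b hb) (hdep w hw) h1 h2 h3.symm)
      · rintro rfl; linarith
      · rintro rfl; linarith
      · rintro rfl; linarith)
    (by
      intro a b a' b' hab hab' hX hX' x y hxy h1 h2 h3 h4 h5 h6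
      have ⟨ha, hb⟩ := hmem a b hab
      have ⟨ha', hb'⟩ := hmem a' b' hab'
      obtain ⟨z, hz1, hz2, hz⟩ := exists_crossing_of_lineHeight X H hxy h5 h6
      set h := lineHeight X H a b z with hh
      have hpos : 0 < h := lineHeight_pos (hHpos a ha) (hHpos b hb) (by linarith) (by linarith)
      set P : Pt := !₂[q 0 - h⁻¹ * (α ^ 2 + β ^ 2)⁻¹ * (α - β * z),
        q 1 - h⁻¹ * (α ^ 2 + β ^ 2)⁻¹ * (β + α * z)] with hP
      have hPd : sightDepth α β q P = h⁻¹ := by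
        simp [sightDepth, hP]
        field_simp
        ring
      have hPo : sightOffset α β q P = z * h⁻¹ := by
        simp [sightOffset, hP]
        field_simp
        ring
      have hPX : X P = z := by
        rw [hXdef]
        unfold sightSlope
        rw [hPd, hPo]
        field_simp
      refine hcross a b a' b' hab hab' ?_ ⟨P, ?_, ?_⟩
      · intro he
        rw [Sym2.eq_iff] at he
        rcases he with ⟨rfl, rfl⟩ | ⟨rfl, rfl⟩
        · linarith
        · linarith
      · refine mem_openSegment_of_lineHeight hαβ (hdep a ha) (hdep b hb) ?_ ?_ ?_ ?_
        · rw [hPd]; positivity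
        · change X a < X P; rw [hPX]; linarith
        · change X P < X b; rw [hPX]; linarith
        · change lineHeight X H a b (X P) = _
          rw [hPX, hPd, inv_inv]
      · refine mem_openSegment_of_lineHeight hαβ (hdep a' ha') (hdep b' hb') ?_ ?_ ?_ ?_
        · rw [hPd]; positivity
        · change X a' < X P; rw [hPX]; linarith
        · change X P < X b'; rw [hPX]; linarith
        · change lineHeight X H a' b' (X P) = _
          rw [hPX, hPd, inv_inv, ← hz])
  refine ⟨p, hpA, hpc, ?_⟩
  have main : ∀ a b, adj a b → X a < X b → ¬ SegCross q p a b := by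
    rintro a b hab hlt ⟨P, hP1, hP2⟩
    have ⟨ha, hb⟩ := hmem a b hab
    obtain ⟨h1, h2, h3⟩ := lineHeight_of_mem_openSegment (hdep a ha) (hdep b hb) hlt hP2
    obtain ⟨s, t, hs, ht, hst, rfl⟩ := hP1
    have hq1 : sightDepth α β q q = 0 := by simp [sightDepth]
    have hq2 : sightOffset α β q q = 0 := by simp [sightOffset]
    have hd : sightDepth α β q (s • q + t • p) = t * sightDepth α β q p := by
      rw [sightDepth_comb hst, hq1]; ring
    have hX : sightSlope α β q (s • q + t • p) = X p := by
      have := (hdep p hpA).ne'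
      rw [hXdef]
      unfold sightSlope
      rw [hd, sightOffset_comb hst, hq2]
      field_simp
      ring
    rw [hX] at h1 h2 h3
    have h4 := hpvis a b hab h1 h2
    have h5 : lineHeight X H a b (X p) = _ := h3
    rw [h5, hd] at h4
    have h6 : (sightDepth α β q p)⁻¹ ≤ (t * sightDepth α β q p)⁻¹ := by
      have := hdep p hpA
      apply inv_anti₀ (by positivity)
      nlinarith
    exact absurd h4 (not_lt.mpr h6)
  intro e he hcr
  have hee : adj e.1 e.2 := Or.inl he
  have ⟨h1, h2⟩ := hmem _ _ hee
  have hne : e.1 ≠ e.2 := by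
    intro h
    have h3 := hE.red _ he
    have h4 := hE.blue _ he
    rw [h, h4] at h3
    simp at h3
  rcases lt_or_gt_of_ne (fun h => hne (hinj h1 h2 h)) with h | h
  · exact main _ _ hee h hcr
  · exact main _ _ (Or.symm hee) h (segCross_swap_right hcr)

/-! ### Joining plane connected red-blue graphs -/

/-- Total length of a set of edges. -/
def totalLen (E : Finset (Pt × Pt)) : ℝ := ∑ e ∈ E, dist e.1 e.2

lemma totalLen_insert_union_le (e : Pt × Pt) (E F : Finset (Pt × Pt)) :
    totalLen (insert e (E ∪ F)) ≤ totalLen E + totalLen F + dist e.1 e.2 := by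
  have h₁ : totalLen (insert e (E ∪ F)) ≤ dist e.1 e.2 + totalLen (E ∪ F) := by
    unfold totalLen
    by_cases h : e ∈ E ∪ F
    · rw [Finset.insert_eq_of_mem h]
      linarith [dist_nonneg (x := e.1) (y := e.2)]
    · rw [Finset.sum_insert h]
  have h₂ : totalLen (E ∪ F) + ∑ e ∈ E ∩ F, dist e.1 e.2 = totalLen E + totalLen F :=
    Finset.sum_union_inter
  have h₃ : 0 ≤ ∑ e ∈ E ∩ F, dist e.1 e.2 := Finset.sum_nonneg fun _ _ => dist_nonneg
  linarith

lemma GenPos.mono {A B : Finset Pt} (hB : GenPos B) (h : A ⊆ B) : GenPos A :=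
  fun p hp q hq r hr => hB p (h hp) q (h hq) r (h hr)

lemma PlaneConnected.singleton (col : Pt → Bool) (q : Pt) : PlaneConnected col {q} ∅ := by
  refine ⟨by simp, by simp, by simp, by simp, ?_⟩
  intro a ha b hb
  rw [Finset.mem_singleton] at ha hb
  rw [ha, hb]
  exact .refl _

lemma PlaneConnected.join {col : Pt → Bool} {A B : Finset Pt} {E F : Finset (Pt × Pt)}
    (hE : PlaneConnected col A E) (hF : PlaneConnected col B F) {r b : Pt}
    (hrb : r ∈ A ∧ b ∈ B ∨ r ∈ B ∧ b ∈ A) (hr : col r = true) (hb : col b = false)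
    (hEF : ∀ e ∈ E, ∀ e' ∈ F, ¬ SegCross e.1 e.2 e'.1 e'.2)
    (hE' : ∀ e ∈ E, ¬ SegCross r b e.1 e.2) (hF' : ∀ e ∈ F, ¬ SegCross r b e.1 e.2) :
    PlaneConnected col (A ∪ B) (insert (r, b) (E ∪ F)) := by
  constructor
  · intro e he
    simp only [Finset.mem_insert, Finset.mem_union] at he ⊢
    rcases he with rfl | he | he
    · tauto
    · have := hE.mem e he; tauto
    · have := hF.mem e he; tauto
  · intro e he
    simp only [Finset.mem_insert, Finset.mem_union] at he
    rcases he with rfl | he | he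
    exacts [hr, hE.red e he, hF.red e he]
  · intro e he
    simp only [Finset.mem_insert, Finset.mem_union] at he
    rcases he with rfl | he | he
    exacts [hb, hE.blue e he, hF.blue e he]
  · intro e he e' he' hne
    simp only [Finset.mem_insert, Finset.mem_union] at he he'
    rcases he with rfl | he | he <;> rcases he' with rfl | he' | he'
    · exact absurd rfl hne
    · exact hE' _ he'
    · exact hF' _ he'
    · exact fun h => hE' _ he (segCross_comm h)
    · exact hE.plane _ he _ he' hne
    · exact hEF _ he _ he'
    · exact fun h => hF' _ he (segCross_comm h)
    · exact fun h => hEF _ he' _ he (segCross_comm h)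
    · exact hF.plane _ he _ he' hne
  · set R : Pt → Pt → Prop := fun x y => (x, y) ∈ insert (r, b) (E ∪ F) with hR
    have hA : ∀ x ∈ A, ∀ y ∈ A, Relation.EqvGen R x y := fun x hx y hy =>
      (hE.conn x hx y hy).mono fun u v h => by simp [hR, h]
    have hB : ∀ x ∈ B, ∀ y ∈ B, Relation.EqvGen R x y := fun x hx y hy =>
      (hF.conn x hx y hy).mono fun u v h => by simp [hR, h]
    have hRrb : Relation.EqvGen R r b := .rel _ _ (by simp [hR])
    have hAB : ∀ x ∈ A, ∀ y ∈ B, Relation.EqvGen R x y := by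
      intro x hx y hy
      rcases hrb with ⟨h₁, h₂⟩ | ⟨h₁, h₂⟩
      · exact .trans _ _ _ (hA x hx r h₁) (.trans _ _ _ hRrb (hB b h₂ y hy))
      · exact .trans _ _ _ (hA x hx b h₂) (.trans _ _ _ hRrb.symm (hB r h₁ y hy))
    intro x hx y hy
    rw [Finset.mem_union] at hx hy
    rcases hx with hx | hx <;> rcases hy with hy | hy
    exacts [hA x hx y hy, hAB x hx y hy, (hAB y hy x hx).symm, hB x hx y hy]

/-- The linear form with coefficients `α`, `β`. -/
def linForm (α β : ℝ) (v : Pt) : ℝ := α * v 0 + β * v 1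

lemma linForm_comb (α β s t : ℝ) (v w : Pt) :
    linForm α β (s • v + t • w) = s * linForm α β v + t * linForm α β w := by
  simp only [linForm, PiLp.add_apply, PiLp.smul_apply, smul_eq_mul]
  ring

lemma linForm_lt_of_mem_openSegment {α β t : ℝ} {a b P : Pt} (ha : linForm α β a < t)
    (hb : linForm α β b ≤ t) (hP : P ∈ openSegment ℝ a b) : linForm α β P < t := by
  obtain ⟨x, y, hx, hy, hxy, rfl⟩ := hP
  rw [linForm_comb]
  obtain rfl : y = 1 - x := by linarith
  nlinarith [mul_lt_mul_of_pos_left ha hx, mul_le_mul_of_nonneg_left hb hy.le]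

lemma le_linForm_of_mem_openSegment {α β t : ℝ} {a b P : Pt} (ha : t ≤ linForm α β a)
    (hb : t ≤ linForm α β b) (hP : P ∈ openSegment ℝ a b) : t ≤ linForm α β P := by
  obtain ⟨x, y, hx, hy, hxy, rfl⟩ := hP
  rw [linForm_comb]
  obtain rfl : y = 1 - x := by linarith
  nlinarith [mul_le_mul_of_nonneg_left ha hx.le, mul_le_mul_of_nonneg_left hb hy.le]

/-- Two plane connected graphs separated by a line can be joined by one edge. -/
lemma PlaneConnected.exists_union {col : Pt → Bool} {A B : Finset Pt} {E F : Finset (Pt × Pt)}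
    (hE : PlaneConnected col A E) (hF : PlaneConnected col B F) (hA : TwoColored col A)
    (hB : B.Nonempty) (hgen : GenPos (A ∪ B)) {α β t : ℝ} (hAt : ∀ a ∈ A, linForm α β a < t)
    (hBt : ∀ b ∈ B, t ≤ linForm α β b) {D : ℝ} (hD : ∀ p ∈ A ∪ B, ∀ q ∈ A ∪ B, dist p q ≤ D) :
    ∃ G, PlaneConnected col (A ∪ B) G ∧ totalLen G ≤ totalLen E + totalLen F + D := by
  obtain ⟨q, hqB, hqmin⟩ := B.exists_min_image (linForm α β) hB
  obtain ⟨p, hpA, hpc, hvis⟩ := hE.exists_visible hA (q := q) (α := α) (β := β)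
    (hgen.mono (Finset.insert_subset (Finset.mem_union_right _ hqB) Finset.subset_union_left))
    (fun a ha => lt_of_lt_of_le (hAt a ha) (hBt q hqB)) (!col q)
  have hpq : linForm α β p < linForm α β q := lt_of_lt_of_le (hAt p hpA) (hBt q hqB)
  have hEF : ∀ e ∈ E, ∀ e' ∈ F, ¬ SegCross e.1 e.2 e'.1 e'.2 := by
    rintro e he e' he' ⟨P, h₁, h₂⟩
    exact absurd (linForm_lt_of_mem_openSegment (hAt _ (hE.mem e he).1)
      (hAt _ (hE.mem e he).2).le h₁) (not_lt.mpr (le_linForm_of_mem_openSegment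
      (hBt _ (hF.mem e' he').1) (hBt _ (hF.mem e' he').2) h₂))
  have hF' : ∀ e ∈ F, ¬ SegCross p q e.1 e.2 := by
    rintro e he ⟨P, h₁, h₂⟩
    exact absurd (linForm_lt_of_mem_openSegment hpq le_rfl h₁) (not_lt.mpr
      (le_linForm_of_mem_openSegment (hqmin _ (hF.mem e he).1) (hqmin _ (hF.mem e he).2) h₂))
  have hpU := Finset.mem_union_left B hpA
  have hqU := Finset.mem_union_right A hqB
  cases hq : col q
  · refine ⟨_, hE.join hF (Or.inl ⟨hpA, hqB⟩) (by simpa [hq] using hpc) hq hEF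
      (fun e he h => hvis e he (segCross_swap_left h)) hF', ?_⟩
    exact (totalLen_insert_union_le _ _ _).trans (by gcongr; exact hD p hpU q hqU)
  · refine ⟨_, hE.join hF (Or.inr ⟨hqB, hpA⟩) hq (by simpa [hq] using hpc) hEF
      hvis (fun e he h => hF' e he (segCross_swap_left h)), ?_⟩
    exact (totalLen_insert_union_le _ _ _).trans (by gcongr; exact hD q hqU p hpU)

lemma exists_linForm_separation {A : Finset Pt} {q : Pt}
    (hq : q ∉ convexHull ℝ (A : Set Pt)) :
    ∃ α β t : ℝ, (∀ a ∈ A, linForm α β a < t) ∧ t ≤ linForm α β q := by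
  obtain ⟨f, u, hf, hfq⟩ := geometric_hahn_banach_closed_point (convex_convexHull ℝ (A : Set Pt))
    (A.finite_toSet.isCompact_convexHull (𝕜 := ℝ)).isClosed hq
  have hlin : ∀ v : Pt, f v = linForm (f !₂[1, 0]) (f !₂[0, 1]) v := by
    intro v
    have : v = v 0 • !₂[(1 : ℝ), 0] + v 1 • !₂[(0 : ℝ), 1] := by
      ext i
      fin_cases i <;> simp
    conv_lhs => rw [this]
    simp only [map_add, map_smul, smul_eq_mul, linForm]
    ring
  refine ⟨f !₂[1, 0], f !₂[0, 1], u, fun a ha => ?_, ?_⟩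
  · rw [← hlin]
    exact hf a (subset_convexHull ℝ _ ha)
  · rw [← hlin]
    exact hfq.le

lemma PlaneConnected.exists_insert {col : Pt → Bool} {A : Finset Pt} {E : Finset (Pt × Pt)}
    (hE : PlaneConnected col A E) (hA : TwoColored col A) {q : Pt}
    (hq : q ∉ convexHull ℝ (A : Set Pt)) (hgen : GenPos (insert q A)) {D : ℝ}
    (hD : ∀ p ∈ insert q A, ∀ p' ∈ insert q A, dist p p' ≤ D) :
    ∃ G, PlaneConnected col (insert q A) G ∧ totalLen G ≤ totalLen E + D := by
  obtain ⟨α, β, t, hAt, hqt⟩ := exists_linForm_separation hq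
  have hU : A ∪ {q} = insert q A := by rw [Finset.union_comm, Finset.insert_eq]
  obtain ⟨G, hG, hlen⟩ := hE.exists_union (PlaneConnected.singleton col q) hA
    (Finset.singleton_nonempty q) (hU ▸ hgen) hAt (by simpa using hqt) (by rwa [hU])
  rw [hU] at hG
  exact ⟨G, hG, by simpa [totalLen] using hlen⟩

/-- A finite set not contained in a convex set `C` has an extreme point outside `C`. -/
lemma exists_extreme_notMem {S : Finset Pt} {C : Set Pt} (hC : Convex ℝ C)
    (hSC : ¬ (S : Set Pt) ⊆ C) :
    ∃ q ∈ S, q ∉ C ∧ q ∉ convexHull ℝ ((S.erase q : Finset Pt) : Set Pt) := by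
  by_contra! hno
  apply hSC
  set K := convexHull ℝ (S : Set Pt) with hK
  have hext : K.extremePoints ℝ ⊆ S := extremePoints_convexHull_subset
  have hsub : K.extremePoints ℝ ⊆ C := by
    intro q hq
    by_contra hqC
    have h₁ := hno q (hext hq) hqC
    have h₂ := ((convex_convexHull ℝ (S : Set Pt)).mem_extremePoints_iff_convex_sdiff).mp hq
    have h₃ : ((S.erase q : Finset Pt) : Set Pt) ⊆ K \ {q} := by
      intro x hx
      rw [Finset.mem_coe, Finset.mem_erase] at hx
      exact ⟨subset_convexHull ℝ _ hx.2, hx.1⟩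
    exact (convexHull_min h₃ h₂.2 h₁).2 rfl
  have hkm : closure (convexHull ℝ (K.extremePoints ℝ)) = K :=
    closure_convexHull_extremePoints (S.finite_toSet.isCompact_convexHull (𝕜 := ℝ))
      (convex_convexHull ℝ _)
  rw [((S.finite_toSet.subset hext).isCompact_convexHull (𝕜 := ℝ)).isClosed.closure_eq] at hkm
  calc (S : Set Pt) ⊆ K := subset_convexHull ℝ _
    _ = _ := hkm.symm
    _ ⊆ C := convexHull_min hsub hC

lemma TwoColored.mono {col : Pt → Bool} {A B : Finset Pt} (hA : TwoColored col A) (h : A ⊆ B) :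
    TwoColored col B := by
  obtain ⟨⟨r, hr, hr'⟩, b, hb, hb'⟩ := hA
  exact ⟨⟨r, h hr, hr'⟩, b, h hb, hb'⟩

/-- A plane connected graph extends to any set of points separated from it by a line. -/
lemma PlaneConnected.exists_extend {col : Pt → Bool} {A : Finset Pt} {E : Finset (Pt × Pt)}
    (hE : PlaneConnected col A E) (hA : TwoColored col A) {α β t D : ℝ}
    (hAt : ∀ a ∈ A, linForm α β a < t) (B : Finset Pt) (hBt : ∀ b ∈ B, t ≤ linForm α β b)
    (hgen : GenPos (A ∪ B)) (hD : ∀ p ∈ A ∪ B, ∀ q ∈ A ∪ B, dist p q ≤ D) :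
    ∃ G, PlaneConnected col (A ∪ B) G ∧ totalLen G ≤ totalLen E + B.card * D := by
  induction hn : B.card generalizing B with
  | zero =>
    rw [Finset.card_eq_zero] at hn
    subst hn
    exact ⟨E, by simpa using hE, by simp⟩
  | succ n ih =>
    have hconv : Convex ℝ {v : Pt | linForm α β v < t} := by
      intro x hx y hy a b ha hb hab
      simp only [Set.mem_ofPred_eq] at *
      rw [linForm_comb]
      have hm : max (linForm α β x) (linForm α β y) < t := max_lt hx hy
      have h₁ := mul_le_mul_of_nonneg_left (le_max_left (linForm α β x) (linForm α β y)) ha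
      have h₂ := mul_le_mul_of_nonneg_left (le_max_right (linForm α β x) (linForm α β y)) hb
      have h₃ : a * max (linForm α β x) (linForm α β y) +
        b * max (linForm α β x) (linForm α β y) = max (linForm α β x) (linForm α β y) := by
        rw [← add_mul, hab, one_mul]
      linarith
    obtain ⟨b, hb⟩ : B.Nonempty := Finset.card_pos.mp (by omega)
    obtain ⟨q, hqS, hqC, hq⟩ := exists_extreme_notMem (S := A ∪ B) hconv
      (fun h => absurd (h (show b ∈ ((A ∪ B : Finset Pt) : Set Pt) by simp [hb]))
        (not_lt.mpr (hBt b hb)))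
    have hqA : q ∉ A := fun h => hqC (hAt q h)
    have hqB : q ∈ B := (Finset.mem_union.mp hqS).resolve_left hqA
    have hsub : A ∪ B.erase q ⊆ A ∪ B := Finset.union_subset_union_right (B.erase_subset q)
    have hins : insert q (A ∪ B.erase q) = A ∪ B := by
      rw [← Finset.union_insert, Finset.insert_erase hqB]
    have her : (A ∪ B).erase q = A ∪ B.erase q := by
      rw [Finset.erase_union_distrib, Finset.erase_eq_of_notMem hqA]
    obtain ⟨G, hG, hlen⟩ := ih (B.erase q) (fun b hb => hBt b (Finset.mem_of_mem_erase hb))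
      (hgen.mono hsub) (fun p hp p' hp' => hD p (hsub hp) p' (hsub hp'))
      (by rw [Finset.card_erase_of_mem hqB, hn]; rfl)
    obtain ⟨G', hG', hlen'⟩ := hG.exists_insert (hA.mono Finset.subset_union_left) (q := q)
      (by rwa [← her]) (by rwa [hins]) (D := D) (by rwa [hins])
    rw [hins] at hG'
    refine ⟨G', hG', hlen'.trans ?_⟩
    push_cast
    linarith

/-- Every two-coloured set in general position carries a plane connected red-blue graph. -/
lemma exists_planeConnected {col : Pt → Bool} (S : Finset Pt) (hS : TwoColored col S)
    (hgen : GenPos S) {D : ℝ} (hD : ∀ p ∈ S, ∀ q ∈ S, dist p q ≤ D) :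
    ∃ G, PlaneConnected col S G ∧ totalLen G ≤ S.card * D := by
  induction hn : S.card generalizing S with
  | zero =>
    obtain ⟨⟨r, hr, -⟩, -⟩ := hS
    rw [Finset.card_eq_zero] at hn
    simp [hn] at hr
  | succ n ih =>
    have hD0 : 0 ≤ D := by
      obtain ⟨⟨r, hr, -⟩, -⟩ := hS
      exact dist_nonneg.trans (hD r hr r hr)
    by_cases hq : ∃ q ∈ S, q ∉ convexHull ℝ ((S.erase q : Finset Pt) : Set Pt) ∧
        TwoColored col (S.erase q)
    · obtain ⟨q, hqS, hq, h2⟩ := hq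
      have hsub := S.erase_subset q
      obtain ⟨G, hG, hlen⟩ := ih (S.erase q) h2 (hgen.mono hsub)
        (fun p hp p' hp' => hD p (hsub hp) p' (hsub hp'))
        (by rw [Finset.card_erase_of_mem hqS, hn]; rfl)
      obtain ⟨G', hG', hlen'⟩ := hG.exists_insert h2 hq (D := D)
        (by rwa [Finset.insert_erase hqS]) (by rwa [Finset.insert_erase hqS])
      rw [Finset.insert_erase hqS] at hG'
      refine ⟨G', hG', hlen'.trans ?_⟩
      push_cast
      linarith
    · push Not at hq
      obtain ⟨⟨r, hr, hrc⟩, b, hb, hbc⟩ := hS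
      have hrb : r ≠ b := by rintro rfl; simp [hrc] at hbc
      obtain ⟨q₁, hq₁S, -, hq₁⟩ := exists_extreme_notMem (S := S) (convex_empty (𝕜 := ℝ))
        (fun h => h hr)
      obtain ⟨q₂, hq₂S, hq₂₁, hq₂⟩ := exists_extreme_notMem (S := S) (convex_singleton (𝕜 := ℝ) q₁)
        (fun h => hrb ((h hr).trans (h hb).symm))
      rw [Set.mem_singleton_iff] at hq₂₁
      have huniq : ∀ q ∈ S, ¬ TwoColored col (S.erase q) → ∀ x ∈ S, col x = col q → x = q := by
        intro q hq hnot x hx hxc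
        by_contra hxq
        obtain ⟨y, hy, hyc⟩ : ∃ y ∈ S, col y = !col q := by
          cases col q
          · exact ⟨r, hr, hrc⟩
          · exact ⟨b, hb, hbc⟩
        have hyq : y ≠ q := by rintro rfl; simp at hyc
        apply hnot
        have h₁ := Finset.mem_erase.mpr ⟨hxq, hx⟩
        have h₂ := Finset.mem_erase.mpr ⟨hyq, hy⟩
        cases hqc : col q
        · exact ⟨⟨y, h₂, by simp [hyc, hqc]⟩, x, h₁, by simp [hxc, hqc]⟩
        · exact ⟨⟨x, h₁, by simp [hxc, hqc]⟩, y, h₂, by simp [hyc, hqc]⟩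
      have u₁ := huniq q₁ hq₁S (hq q₁ hq₁S hq₁)
      have u₂ := huniq q₂ hq₂S (hq q₂ hq₂S hq₂)
      have hcol : ∀ x ∈ S, x = r ∨ x = b := by
        have hne : col q₁ ≠ col q₂ := fun h => hq₂₁ (u₁ q₂ hq₂S h.symm)
        intro x hx
        have h₁ := u₁ x hx
        have h₂ := u₂ x hx
        have h₃ := u₁ r hr
        have h₄ := u₂ r hr
        have h₅ := u₁ b hb
        have h₆ := u₂ b hb
        rw [hrc] at h₃ h₄
        rw [hbc] at h₅ h₆
        cases h' : col q₁ <;> cases h'' : col q₂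
        · exact absurd (h'.trans h''.symm) hne
        · rw [h₄ h''.symm, h₅ h'.symm]
          cases h : col x
          · exact Or.inr (h₁ (h.trans h'.symm))
          · exact Or.inl (h₂ (h.trans h''.symm))
        · rw [h₃ h'.symm, h₆ h''.symm]
          cases h : col x
          · exact Or.inr (h₂ (h.trans h''.symm))
          · exact Or.inl (h₁ (h.trans h'.symm))
        · exact absurd (h'.trans h''.symm) hne
      have hSeq : {r} ∪ {b} = S := by
        ext x
        simp only [Finset.mem_union, Finset.mem_singleton]
        exact ⟨fun h => by rcases h with rfl | rfl <;> assumption, hcol x⟩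
      have hG := (PlaneConnected.singleton col r).join (PlaneConnected.singleton col b)
        (Or.inl ⟨Finset.mem_singleton_self r, Finset.mem_singleton_self b⟩) hrc hbc
        (by simp) (by simp) (by simp)
      rw [hSeq] at hG
      refine ⟨_, hG, ?_⟩
      have h₁ : totalLen (insert (r, b) (∅ ∪ ∅)) ≤ D := by simpa [totalLen] using hD r hr b hb
      have h₂ : (0 : ℝ) ≤ n * D := by positivity
      push_cast
      linarith

/-! ### Hierarchical decompositions -/

lemma exists_separation_symm {A B : Finset Pt} {α β t : ℝ} (hA : A.Nonempty)
    (hAt : ∀ a ∈ A, linForm α β a < t) (hBt : ∀ b ∈ B, t ≤ linForm α β b) :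
    ∃ t', (∀ b ∈ B, linForm (-α) (-β) b < t') ∧ ∀ a ∈ A, t' ≤ linForm (-α) (-β) a := by
  have hneg : ∀ v, linForm (-α) (-β) v = -linForm α β v := fun v => by unfold linForm; ring
  obtain ⟨a₀, ha₀, hmin⟩ := A.exists_min_image (linForm (-α) (-β)) hA
  refine ⟨_, fun b hb => ?_, hmin⟩
  rw [hneg, hneg]
  linarith [hAt a₀ ha₀, hBt b hb]

/-- The cost of a vertex `v` up to level `K`: the scale of every level at which `v` is separated
from its parent. -/
def cutCost {κ : Type*} (cell : ℕ → Pt → κ) (par : Pt → Pt) (scale : ℕ → ℝ) (K : ℕ) (v : Pt) : ℝ :=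
  scale 0 + ∑ k ∈ Finset.range K, if cell k v ≠ cell k (par v) then scale (k + 1) else 0

lemma card_mul_le_sum_ite {ι : Type*} {A T : Finset ι} {p : ι → Prop} {D : ℝ} (hD : 0 ≤ D)
    (hTA : T ⊆ A) (hT : ∀ v ∈ T, p v) : T.card * D ≤ ∑ v ∈ A, if p v then D else 0 := by
  calc (T.card : ℝ) * D = ∑ v ∈ T, if p v then D else 0 := by
        rw [Finset.sum_congr rfl (fun v hv => if_pos (hT v hv)), Finset.sum_const, nsmul_eq_mul]
    _ ≤ _ := Finset.sum_le_sum_of_subset_of_nonneg hTA fun v _ _ => by split_ifs <;> simp [hD]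

lemma exists_planeConnected_of_hierarchy {κ : Type*} {S : Finset Pt} {col : Pt → Bool}
    {par : Pt → Pt} {depth : Pt → ℕ} {root : Pt} {cell : ℕ → Pt → κ} {scale : ℕ → ℝ}
    (hgen : GenPos S) (hpar : ∀ v ∈ S, par v ∈ S ∧ col (par v) ≠ col v)
    (hdepth : ∀ v ∈ S, v ≠ root → depth (par v) < depth v)
    (hrefine : ∀ k v w, cell k v = cell k w → cell (k + 1) v = cell (k + 1) w)
    (hdiam : ∀ k, ∀ v ∈ S, ∀ w ∈ S, cell k v = cell k w → dist v w ≤ scale k)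
    (hsplit : ∀ k c, ∃ α β t : ℝ, ∀ v ∈ S, ∀ w ∈ S, cell (k + 1) v = c → cell (k + 1) w = c →
      (cell k v = cell k w ↔ (linForm α β v < t ↔ linForm α β w < t)))
    (K : ℕ) (c : κ) (hcol : TwoColored col (S.filter fun v => cell K v = c)) :
    ∃ E, PlaneConnected col (S.filter fun v => cell K v = c) E ∧
      totalLen E ≤ ∑ v ∈ S.filter (fun v => cell K v = c), cutCost cell par scale K v := by
  induction K generalizing c with
  | zero =>
    obtain ⟨E, hE, hlen⟩ := exists_planeConnected _ hcol (hgen.mono (Finset.filter_subset _ _))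
      (D := scale 0) (by
        intro p hp q hq
        rw [Finset.mem_filter] at hp hq
        exact hdiam 0 p hp.1 q hq.1 (hp.2.trans hq.2.symm))
    refine ⟨E, hE, hlen.trans (le_of_eq ?_)⟩
    simp [cutCost]
  | succ K ih =>
    set A := S.filter fun v => cell (K + 1) v = c with hA
    obtain ⟨α, β, t, hsep⟩ := hsplit K c
    set D := scale (K + 1) with hDdef
    have hAS : A ⊆ S := Finset.filter_subset _ _
    have hAgen : GenPos A := hgen.mono hAS
    have hAD : ∀ p ∈ A, ∀ q ∈ A, dist p q ≤ D := by
      intro p hp q hq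
      rw [hA, Finset.mem_filter] at hp hq
      exact hdiam _ p hp.1 q hq.1 (hp.2.trans hq.2.symm)
    have hD0 : 0 ≤ D := by
      obtain ⟨⟨r, hr, -⟩, -⟩ := hcol
      exact dist_nonneg.trans (hAD r hr r hr)
    set A₁ := A.filter fun v => linForm α β v < t with hA₁
    set A₂ := A.filter fun v => ¬ linForm α β v < t with hA₂
    have hU : A₁ ∪ A₂ = A := Finset.filter_union_filter_not_eq _ _
    have hlt : ∀ v ∈ A₁, linForm α β v < t := fun v hv => (Finset.mem_filter.mp hv).2
    have hge : ∀ v ∈ A₂, t ≤ linForm α β v := fun v hv => not_lt.mp (Finset.mem_filter.mp hv).2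
    have hclass₁ : ∀ v ∈ A₁, A₁ = S.filter fun w => cell K w = cell K v := by
      intro v hv
      have hvA := (Finset.mem_filter.mp hv).1
      have hvS := Finset.mem_filter.mp hvA
      ext w
      constructor
      · intro hw
        have hwS := Finset.mem_filter.mp (Finset.mem_filter.mp hw).1
        refine Finset.mem_filter.mpr ⟨hwS.1, (hsep w hwS.1 v hvS.1 hwS.2 hvS.2).mpr ?_⟩
        simp [hlt v hv, hlt w hw]
      · intro hw
        have hwS := Finset.mem_filter.mp hw
        have hwc := (hrefine K w v hwS.2).trans hvS.2
        exact Finset.mem_filter.mpr ⟨Finset.mem_filter.mpr ⟨hwS.1, hwc⟩,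
          ((hsep w hwS.1 v hvS.1 hwc hvS.2).mp hwS.2).mpr (hlt v hv)⟩
    have hclass₂ : ∀ v ∈ A₂, A₂ = S.filter fun w => cell K w = cell K v := by
      intro v hv
      have hvA := (Finset.mem_filter.mp hv).1
      have hvS := Finset.mem_filter.mp hvA
      ext w
      constructor
      · intro hw
        have hwS := Finset.mem_filter.mp (Finset.mem_filter.mp hw).1
        refine Finset.mem_filter.mpr ⟨hwS.1, (hsep w hwS.1 v hvS.1 hwS.2 hvS.2).mpr ?_⟩
        simp [not_lt.mpr (hge v hv), not_lt.mpr (hge w hw)]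
      · intro hw
        have hwS := Finset.mem_filter.mp hw
        have hwc := (hrefine K w v hwS.2).trans hvS.2
        exact Finset.mem_filter.mpr ⟨Finset.mem_filter.mpr ⟨hwS.1, hwc⟩,
          fun h => (Finset.mem_filter.mp hv).2 (((hsep w hwS.1 v hvS.1 hwc hvS.2).mp hwS.2).mp h)⟩
    obtain ⟨cut, hcut⟩ : ∃ cut : Pt → Prop, ∀ v, cut v ↔ cell K v ≠ cell K (par v) :=
      ⟨_, fun _ => Iff.rfl⟩
    have hcost : ∀ v, cutCost cell par scale (K + 1) v =
        cutCost cell par scale K v + if cut v then D else 0 := by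
      intro v
      simp only [cutCost, Finset.sum_range_succ, add_assoc, hcut]
      congr 2
    have hsum : ∑ v ∈ A, cutCost cell par scale (K + 1) v =
        ∑ v ∈ A₁, cutCost cell par scale K v + ∑ v ∈ A₂, cutCost cell par scale K v +
          ∑ v ∈ A, if cut v then D else 0 := by
      rw [Finset.sum_congr rfl (fun v _ => hcost v), Finset.sum_add_distrib,
        Finset.sum_filter_add_sum_filter_not A (fun v => linForm α β v < t)]
    have hcost0 : ∀ v, 0 ≤ cutCost cell par scale K v := by
      obtain ⟨⟨r, hr, -⟩, -⟩ := hcol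
      have hs : ∀ k, 0 ≤ scale k := fun k => dist_nonneg.trans (hdiam k r (hAS hr) r (hAS hr) rfl)
      intro v
      refine add_nonneg (hs 0) (Finset.sum_nonneg fun k _ => ?_)
      split_ifs
      exacts [hs _, le_rfl]
    have hrec : ∀ B : Finset Pt, (∀ v ∈ B, B = S.filter fun w => cell K w = cell K v) →
        TwoColored col B → ∃ E, PlaneConnected col B E ∧
          totalLen E ≤ ∑ v ∈ B, cutCost cell par scale K v := by
      intro B hB h2
      obtain ⟨⟨r, hr, -⟩, -⟩ := id h2
      have := hB r hr
      rw [this] at h2 ⊢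
      exact ih _ h2
    have hmono : ∀ B : Finset Pt, (∀ v ∈ B, B = S.filter fun w => cell K w = cell K v) →
        ¬ TwoColored col B → ∀ v ∈ B, cut v := by
      intro B hB h2 v hv
      refine (hcut v).mpr fun hcell => ?_
      apply h2
      have hvS : v ∈ S := by
        rw [hB v hv] at hv
        exact (Finset.mem_filter.mp hv).1
      have hpB : par v ∈ B := by
        rw [hB v hv]
        exact Finset.mem_filter.mpr ⟨(hpar v hvS).1, hcell.symm⟩
      have hne := (hpar v hvS).2
      cases h : col v
      · exact ⟨⟨par v, hpB, by simpa [h] using hne⟩, v, hv, h⟩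
      · exact ⟨⟨v, hv, h⟩, par v, hpB, by simpa [h] using hne⟩
    have hroot : ∀ B : Finset Pt, (∀ v ∈ B, B = S.filter fun w => cell K w = cell K v) →
        B.Nonempty → root ∉ B → ∃ v ∈ B, cut v := by
      intro B hB hne hr
      obtain ⟨v, hv, hmin⟩ := B.exists_min_image depth hne
      refine ⟨v, hv, (hcut v).mpr fun hcell => ?_⟩
      have hvS : v ∈ S := by
        have hv' := hv
        rw [hB v hv] at hv'
        exact (Finset.mem_filter.mp hv').1
      have hpB : par v ∈ B := by
        rw [hB v hv]
        exact Finset.mem_filter.mpr ⟨(hpar v hvS).1, hcell.symm⟩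
      exact absurd (hdepth v hvS (fun h => hr (h ▸ hv))) (not_lt.mpr (hmin _ hpB))
    have hsub₁ : A₁ ⊆ A := Finset.filter_subset _ _
    have hsub₂ : A₂ ⊆ A := Finset.filter_subset _ _
    have hs₁ : 0 ≤ ∑ v ∈ A₁, cutCost cell par scale K v := Finset.sum_nonneg fun v _ => hcost0 v
    have hs₂ : 0 ≤ ∑ v ∈ A₂, cutCost cell par scale K v := Finset.sum_nonneg fun v _ => hcost0 v
    rw [hsum]
    rcases A₁.eq_empty_or_nonempty with he₁ | hne₁
    · have hA₂A : A₂ = A := by rw [← hU, he₁, Finset.empty_union]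
      obtain ⟨E, hE, hlen⟩ := hrec A₂ hclass₂ (hA₂A ▸ hcol)
      have h3 := card_mul_le_sum_ite (T := ∅) (A := A) (p := cut) hD0 (by simp) (by simp)
      rw [Finset.card_empty, Nat.cast_zero, zero_mul] at h3
      exact ⟨E, hA₂A ▸ hE, by linarith⟩
    rcases A₂.eq_empty_or_nonempty with he₂ | hne₂
    · have hA₁A : A₁ = A := by rw [← hU, he₂, Finset.union_empty]
      obtain ⟨E, hE, hlen⟩ := hrec A₁ hclass₁ (hA₁A ▸ hcol)
      have h3 := card_mul_le_sum_ite (T := ∅) (A := A) (p := cut) hD0 (by simp) (by simp)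
      rw [Finset.card_empty, Nat.cast_zero, zero_mul] at h3
      exact ⟨E, hA₁A ▸ hE, by linarith⟩
    obtain ⟨t', hlt', hge'⟩ := exists_separation_symm hne₁ hlt hge
    by_cases h₁ : TwoColored col A₁ <;> by_cases h₂ : TwoColored col A₂
    · obtain ⟨E, hE, hElen⟩ := hrec A₁ hclass₁ h₁
      obtain ⟨F, hF, hFlen⟩ := hrec A₂ hclass₂ h₂
      obtain ⟨G, hG, hGlen⟩ := hE.exists_union hF h₁ hne₂ (hU.symm ▸ hAgen) hlt hge
        (D := D) (by rwa [hU])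
      rw [hU] at hG
      obtain ⟨v, hvA, hv⟩ : ∃ v ∈ A, cut v := by
        by_cases hr : root ∈ A₁
        · have hr₂ : root ∉ A₂ := fun h => absurd (hlt _ hr) (not_lt.mpr (hge _ h))
          obtain ⟨v, hv, hc⟩ := hroot A₂ hclass₂ hne₂ hr₂
          exact ⟨v, hsub₂ hv, hc⟩
        · obtain ⟨v, hv, hc⟩ := hroot A₁ hclass₁ hne₁ hr
          exact ⟨v, hsub₁ hv, hc⟩
      have h3 := card_mul_le_sum_ite (T := {v}) (A := A) (p := cut) hD0 (by simpa) (by simpa)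
      rw [Finset.card_singleton, Nat.cast_one, one_mul] at h3
      exact ⟨G, hG, by linarith⟩
    · obtain ⟨E, hE, hElen⟩ := hrec A₁ hclass₁ h₁
      obtain ⟨G, hG, hGlen⟩ := hE.exists_extend h₁ hlt A₂ hge (hU.symm ▸ hAgen)
        (D := D) (by rwa [hU])
      rw [hU] at hG
      have h3 := card_mul_le_sum_ite hD0 hsub₂ (hmono A₂ hclass₂ h₂)
      exact ⟨G, hG, by linarith⟩
    · have hU' : A₂ ∪ A₁ = A := by rw [Finset.union_comm, hU]
      obtain ⟨E, hE, hElen⟩ := hrec A₂ hclass₂ h₂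
      obtain ⟨G, hG, hGlen⟩ := hE.exists_extend h₂ hlt' A₁ hge' (hU'.symm ▸ hAgen)
        (D := D) (by rwa [hU'])
      rw [hU'] at hG
      have h3 := card_mul_le_sum_ite hD0 hsub₁ (hmono A₁ hclass₁ h₁)
      exact ⟨G, hG, by linarith⟩
    · obtain ⟨G, hG, hGlen⟩ := exists_planeConnected A hcol hAgen hAD
      have h3 := card_mul_le_sum_ite (T := A) (A := A) (p := cut) hD0 (Finset.Subset.refl A) (by
        intro v hv
        rw [← hU, Finset.mem_union] at hv
        exact hv.elim (hmono A₁ hclass₁ h₁ v) (hmono A₂ hclass₂ h₂ v))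
      exact ⟨G, hG, by linarith⟩

/-! ### From spanning trees to edge lists and back -/

lemma graphLen_eq_sum {S : Finset Pt} (G : SimpleGraph ↥S) :
    graphLen G = ∑ e ∈ G.edgeFinset, edgeLen e := by
  unfold graphLen
  rw [← SimpleGraph.coe_edgeFinset, finsum_mem_coe_finset]

lemma edgeLen_nonneg {S : Finset Pt} (e : Sym2 ↥S) : 0 ≤ edgeLen e := by
  induction e with
  | _ a b => exact dist_nonneg (x := (a : Pt)) (y := b)

lemma sum_edgeLen_le_graphLen {S : Finset Pt} {G : SimpleGraph ↥S} {F : Finset (Sym2 ↥S)}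
    (hF : ∀ e ∈ F, e ∈ G.edgeSet) : ∑ e ∈ F, edgeLen e ≤ graphLen G := by
  rw [graphLen_eq_sum]
  exact Finset.sum_le_sum_of_subset_of_nonneg
    (fun e he => SimpleGraph.mem_edgeFinset.mpr (hF e he)) fun e _ _ => edgeLen_nonneg e

lemma dist_le_sum_edgeLen {S : Finset Pt} {G : SimpleGraph ↥S} {u v : ↥S} (p : G.Walk u v) :
    dist (u : Pt) v ≤ (p.edges.map edgeLen).sum := by
  induction p with
  | nil => simp
  | cons h p ih =>
    rw [SimpleGraph.Walk.edges_cons, List.map_cons, List.sum_cons]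
    exact (dist_triangle _ _ _).trans (add_le_add (le_of_eq rfl) ih)

lemma dist_le_graphLen {S : Finset Pt} {G : SimpleGraph ↥S} (hG : G.Connected) (u v : ↥S) :
    dist (u : Pt) v ≤ graphLen G := by
  obtain ⟨p, hp⟩ := hG.exists_isPath u v
  refine (dist_le_sum_edgeLen p).trans ?_
  rw [← List.sum_toFinset _ hp.isTrail.edges_nodup]
  exact sum_edgeLen_le_graphLen fun e he => p.edges_subset_edgeSet (List.mem_toFinset.mp he)

lemma exists_parent_graph {V : Type*} [Nontrivial V] {G : SimpleGraph V} (hG : G.Connected)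
    (root : V) : ∃ f : V → V, (∀ v, G.Adj v (f v)) ∧
      ∀ v, v ≠ root → G.dist (f v) root < G.dist v root := by
  have h : ∀ v, ∃ w, G.Adj v w ∧ (v ≠ root → G.dist w root < G.dist v root) := by
    intro v
    by_cases hv : v = root
    · obtain ⟨w, hw⟩ := exists_ne v
      obtain ⟨p, -⟩ := hG.exists_walk_length_eq_dist v w
      cases p with
      | nil => exact absurd rfl hw
      | cons h p => exact ⟨_, h, fun h => absurd hv h⟩
    · obtain ⟨p, hp⟩ := hG.exists_walk_length_eq_dist v root
      cases p with
      | nil => exact absurd rfl hv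
      | cons h p =>
        refine ⟨_, h, fun _ => ?_⟩
        rw [← hp, SimpleGraph.Walk.length_cons]
        exact Nat.lt_succ_of_le (SimpleGraph.dist_le p)
  choose f hf using h
  exact ⟨f, fun v => (hf v).1, fun v => (hf v).2⟩

/-- A bichromatic spanning tree, rooted at `root` and encoded by its parent map. -/
lemma exists_parent_map {S : Finset Pt} {col : Pt → Bool} {G : SimpleGraph ↥S}
    (hG : G.Connected) (hcol : Bichromatic col G) (hS : 2 ≤ S.card) (root : ↥S) :
    ∃ (par : Pt → Pt) (depth : Pt → ℕ), (∀ v ∈ S, par v ∈ S ∧ col (par v) ≠ col v) ∧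
      (∀ v ∈ S, v ≠ root → depth (par v) < depth v) ∧
      ∑ v ∈ S, dist v (par v) ≤ 2 * graphLen G := by
  have : Nontrivial ↥S := by
    rwa [← Fintype.one_lt_card_iff_nontrivial, Fintype.card_coe]
  obtain ⟨f, hadj, hdist⟩ := exists_parent_graph hG root
  refine ⟨fun p => if h : p ∈ S then f ⟨p, h⟩ else p,
    fun p => if h : p ∈ S then G.dist ⟨p, h⟩ root else 0, ?_, ?_, ?_⟩
  · intro v hv
    simp only [hv, dite_true]
    exact ⟨(f _).2, (hcol _ _ (hadj ⟨v, hv⟩)).symm⟩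
  · intro v hv hne
    have := hdist ⟨v, hv⟩ fun h => hne (congrArg Subtype.val h)
    simpa [hv] using this
  · rw [← Finset.sum_coe_sort S, ← Finset.sum_erase_add _ _ (Finset.mem_univ root), two_mul]
    simp only [Finset.coe_mem, dite_true, Subtype.coe_eta]
    refine add_le_add ?_ (dist_le_graphLen hG _ _)
    have hinj : Set.InjOn (fun v => s(v, f v)) (Finset.univ.erase root : Finset ↥S) := by
      intro v hv w hw hvw
      simp only [Finset.coe_erase, Set.mem_sdiff, Set.mem_singleton_iff] at hv hw
      rcases Sym2.eq_iff.mp hvw with h | h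
      · exact h.1
      · have h₁ := hdist v hv.2
        have h₂ := hdist w hw.2
        rw [h.2] at h₁
        rw [← h.1] at h₂
        exact absurd h₁ h₂.asymm
    refine le_trans (le_of_eq ?_) (sum_edgeLen_le_graphLen
      (F := (Finset.univ.erase root).image fun v => s(v, f v)) ?_)
    · rw [Finset.sum_image hinj]
      rfl
    · intro e he
      obtain ⟨v, -, rfl⟩ := Finset.mem_image.mp he
      exact hadj v

lemma PlaneConnected.exists_tree {S : Finset Pt} {col : Pt → Bool} {E : Finset (Pt × Pt)}
    (hE : PlaneConnected col S E) (hS : S.Nonempty) :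
    ∃ T : SimpleGraph ↥S, IsBST col T ∧ PlaneGraph T ∧ graphLen T ≤ totalLen E := by
  set G : SimpleGraph ↥S := SimpleGraph.fromRel fun u v => ((u : Pt), (v : Pt)) ∈ E with hGdef
  have hedge : ∀ u v : ↥S, G.Adj u v → ((u : Pt), (v : Pt)) ∈ E ∨ ((v : Pt), (u : Pt)) ∈ E :=
    fun u v h => h.2
  have hne : ∀ p q : Pt, (p, q) ∈ E → p ≠ q := by
    rintro p q h rfl
    exact absurd (hE.red _ h) (by simp [hE.blue _ h])
  have hreach : ∀ p q : Pt, Relation.EqvGen (fun a b => (a, b) ∈ E) p q →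
      (p = q ∨ ∃ (hp : p ∈ S) (hq : q ∈ S), G.Reachable ⟨p, hp⟩ ⟨q, hq⟩) := by
    intro p q h
    induction h with
    | rel a b h =>
      refine Or.inr ⟨(hE.mem _ h).1, (hE.mem _ h).2, SimpleGraph.Adj.reachable ?_⟩
      exact ⟨fun he => hne a b h (congrArg Subtype.val he), Or.inl h⟩
    | refl a => exact Or.inl rfl
    | symm a b _ ih =>
      rcases ih with rfl | ⟨ha, hb, h⟩
      exacts [Or.inl rfl, Or.inr ⟨hb, ha, h.symm⟩]
    | trans a b c _ _ ih₁ ih₂ =>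
      rcases ih₁ with rfl | ⟨ha, hb, h⟩
      · exact ih₂
      · rcases ih₂ with rfl | ⟨_, hc, h'⟩
        exacts [Or.inr ⟨ha, hb, h⟩, Or.inr ⟨ha, hc, h.trans h'⟩]
  have : Nonempty ↥S := hS.to_subtype
  have hconn : G.Connected := by
    refine ⟨fun u v => ?_⟩
    rcases hreach u v (hE.conn _ u.2 _ v.2) with h | ⟨_, _, h⟩
    · rw [Subtype.ext h]
    · exact h
  obtain ⟨T, hTG, hT⟩ := hconn.exists_isTree_le
  refine ⟨T, ⟨hT, fun u v h => ?_⟩, ?_, ?_⟩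
  · rcases hedge u v (hTG h) with h | h <;> simp [hE.red _ h, hE.blue _ h]
  · rintro _ h₁ _ h₂ hne₁₂ ⟨a, b, c, d, rfl, rfl, hcross⟩
    have key : ∀ a b c d : ↥S, s(a, b) ≠ s(c, d) → ((a : Pt), (b : Pt)) ∈ E →
        ((c : Pt), (d : Pt)) ∈ E → ¬ SegCross (a : Pt) b c d := by
      intro a b c d hn h h'
      refine hE.plane _ h _ h' fun he => hn ?_
      rw [Prod.mk.injEq] at he
      rw [Subtype.ext he.1, Subtype.ext he.2]
    rcases hedge a b (hTG h₁) with h | h <;> rcases hedge c d (hTG h₂) with h' | h'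
    · exact key a b c d hne₁₂ h h' hcross
    · exact key a b d c (by rwa [Sym2.eq_swap (a := d)]) h h' (segCross_swap_right hcross)
    · exact key b a c d (by rwa [Sym2.eq_swap (a := b)]) h h' (segCross_swap_left hcross)
    · exact key b a d c (by rwa [Sym2.eq_swap (a := b), Sym2.eq_swap (a := d)]) h h'
        (segCross_swap_left (segCross_swap_right hcross))
  · have hrep : ∀ e : Sym2 ↥S, e ∈ T.edgeFinset →
        ∃ u v : ↥S, e = s(u, v) ∧ ((u : Pt), (v : Pt)) ∈ E := by
      intro e he
      induction e with
      | _ a b =>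
        rw [SimpleGraph.mem_edgeFinset] at he
        rcases hedge a b (hTG he) with h | h
        exacts [⟨a, b, rfl, h⟩, ⟨b, a, Sym2.eq_swap, h⟩]
    choose! x y hxy using hrep
    have hinj : Set.InjOn (fun e => ((x e : Pt), (y e : Pt))) (T.edgeFinset : Set (Sym2 ↥S)) := by
      intro e he e' he' h
      rw [Prod.mk.injEq] at h
      rw [(hxy e he).1, (hxy e' he').1, Subtype.ext h.1, Subtype.ext h.2]
    calc graphLen T = ∑ e ∈ T.edgeFinset, dist (x e : Pt) (y e) := by
          rw [graphLen_eq_sum]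
          refine Finset.sum_congr rfl fun e he => ?_
          conv_lhs => rw [(hxy e he).1]
          rfl
      _ = totalLen (T.edgeFinset.image fun e => ((x e : Pt), (y e : Pt))) := by
          rw [totalLen, Finset.sum_image hinj]
      _ ≤ totalLen E := by
          refine Finset.sum_le_sum_of_subset_of_nonneg (fun e he => ?_) fun _ _ _ => dist_nonneg
          obtain ⟨e', he', rfl⟩ := Finset.mem_image.mp he
          exact (hxy e' he').2

/-! ### Randomly shifted grids -/

lemma mul_sum_div_shift_le {d : ℕ} (hd : 0 < d) (N X m : ℕ) :
    d * ∑ s ∈ Finset.range N, (X + m + s) / d ≤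
      d * ∑ s ∈ Finset.range N, (X + s) / d + m * (N + d) := by
  induction m with
  | zero => simp
  | succ m ih =>
    have h := Finset.sum_range_succ (fun s => (X + m + s) / d) N
    rw [Finset.sum_range_succ'] at h
    have h₁ : ∑ s ∈ Finset.range N, (X + (m + 1) + s) / d =
        ∑ s ∈ Finset.range N, (X + m + (s + 1)) / d :=
      Finset.sum_congr rfl fun s _ => by congr 1; ring
    have h₂ := Nat.div_mul_le_self (X + m + N) d
    have h₃ := Nat.lt_div_mul_add hd (a := X + m)
    rw [h₁]
    rw [add_zero] at h
    nlinarith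

lemma sum_ite_div_ne_le {d : ℕ} (hd : 0 < d) (N X Y : ℕ) :
    ∑ s ∈ Finset.range N, (if (X + s) / d ≠ (Y + s) / d then (d : ℝ) else 0) ≤
      |(X : ℝ) - Y| * (N + d) := by
  wlog hXY : X ≤ Y generalizing X Y
  · rw [abs_sub_comm]
    simpa only [ne_comm] using this Y X (le_of_not_ge hXY)
  obtain ⟨m, rfl⟩ := Nat.exists_eq_add_of_le hXY
  have h : (d : ℝ) * ∑ s ∈ Finset.range N, (((X + m + s) / d : ℕ) : ℝ) ≤
      d * ∑ s ∈ Finset.range N, (((X + s) / d : ℕ) : ℝ) + m * (N + d) := by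
    exact_mod_cast mul_sum_div_shift_le hd N X m
  calc _ ≤ ∑ s ∈ Finset.range N,
        ((d : ℝ) * (((X + m + s) / d : ℕ) : ℝ) - d * (((X + s) / d : ℕ) : ℝ)) := by
        refine Finset.sum_le_sum fun s _ => ?_
        have hle : (X + s) / d ≤ (X + m + s) / d := Nat.div_le_div_right (by omega)
        have hdR : (0 : ℝ) ≤ d := d.cast_nonneg
        split_ifs with hne
        · have : (((X + s) / d : ℕ) : ℝ) + 1 ≤ (((X + m + s) / d : ℕ) : ℝ) := by
            exact_mod_cast lt_of_le_of_ne hle hne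
          nlinarith
        · have : (((X + s) / d : ℕ) : ℝ) ≤ (((X + m + s) / d : ℕ) : ℝ) := by exact_mod_cast hle
          nlinarith
    _ ≤ m * (N + d) := by
        rw [Finset.sum_sub_distrib, ← Finset.mul_sum, ← Finset.mul_sum]
        linarith
    _ = _ := by
        push_cast
        rw [sub_add_cancel_left, abs_neg, abs_of_nonneg m.cast_nonneg]

/-- Some shift of the grid cuts few of the pairs `(X v, Y v)`, on all levels at once. -/
lemma exists_shift {ι : Type*} (V : Finset ι) (X Y : ι → ℕ) {N K : ℕ} {d : ℕ → ℕ} (hN : 0 < N)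
    (hd : ∀ k < K, 0 < d k ∧ d k ≤ 4 * N) :
    ∃ s < N, ∑ v ∈ V, ∑ k ∈ Finset.range K,
        (if (X v + s) / d k ≠ (Y v + s) / d k then (d k : ℝ) else 0) ≤
      5 * K * ∑ v ∈ V, |(X v : ℝ) - Y v| := by
  set B := 5 * K * ∑ v ∈ V, |(X v : ℝ) - Y v| with hB
  have hsum : ∑ s ∈ Finset.range N, ∑ v ∈ V, ∑ k ∈ Finset.range K,
      (if (X v + s) / d k ≠ (Y v + s) / d k then (d k : ℝ) else 0) ≤
      ∑ s ∈ Finset.range N, B := by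
    rw [Finset.sum_comm, Finset.sum_const, Finset.card_range, nsmul_eq_mul, hB, Finset.mul_sum,
      Finset.mul_sum]
    refine Finset.sum_le_sum fun v _ => ?_
    rw [Finset.sum_comm]
    calc _ ≤ ∑ k ∈ Finset.range K, |(X v : ℝ) - Y v| * (5 * N) := by
          refine Finset.sum_le_sum fun k hk => ?_
          obtain ⟨h₀, h₁⟩ := hd k (Finset.mem_range.mp hk)
          refine (sum_ite_div_ne_le h₀ N (X v) (Y v)).trans ?_
          have : (d k : ℝ) ≤ 4 * N := by exact_mod_cast h₁
          gcongr
          linarith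
      _ = _ := by
          rw [Finset.sum_const, Finset.card_range, nsmul_eq_mul]
          ring
  obtain ⟨s, hs, h⟩ := Finset.exists_le_of_sum_le (Finset.nonempty_range_iff.mpr hN.ne') hsum
  exact ⟨s, Finset.mem_range.mp hs, h⟩

lemma abs_coord_sub_le_dist (v w : Pt) (i : Fin 2) : |v i - w i| ≤ dist v w := by
  rw [dist_eq_norm]
  exact PiLp.norm_apply_le (v - w) i

lemma dist_le_abs_add_abs (v w : Pt) : dist v w ≤ |v 0 - w 0| + |v 1 - w 1| := by
  rw [EuclideanSpace.dist_eq, Fin.sum_univ_two, Real.dist_eq, Real.dist_eq]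
  refine Real.sqrt_le_iff.mpr ⟨by positivity, ?_⟩
  nlinarith [mul_nonneg (abs_nonneg (v 0 - w 0)) (abs_nonneg (v 1 - w 1))]

lemma abs_sub_le_abs_floor_sub_add_one {a b : ℝ} (ha : 0 ≤ a) (hb : 0 ≤ b) :
    |a - b| ≤ |(⌊a⌋₊ : ℝ) - ⌊b⌋₊| + 1 := by
  have h₁ := Nat.floor_le ha
  have h₂ := Nat.floor_le hb
  have h₃ := Nat.lt_floor_add_one a
  have h₄ := Nat.lt_floor_add_one b
  rcases abs_cases (a - b) with h | h <;>
    rcases abs_cases ((⌊a⌋₊ : ℝ) - ⌊b⌋₊) with h' | h' <;> linarith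

lemma abs_floor_sub_le_abs_sub_add_one {a b : ℝ} (ha : 0 ≤ a) (hb : 0 ≤ b) :
    |(⌊a⌋₊ : ℝ) - ⌊b⌋₊| ≤ |a - b| + 1 := by
  have h₁ := Nat.floor_le ha
  have h₂ := Nat.floor_le hb
  have h₃ := Nat.lt_floor_add_one a
  have h₄ := Nat.lt_floor_add_one b
  rcases abs_cases (a - b) with h | h <;>
    rcases abs_cases ((⌊a⌋₊ : ℝ) - ⌊b⌋₊) with h' | h' <;> linarith

/-- An integer coordinate on `S` with resolution `L / S.card` which separates few points from
their parents on the levels `d k`. -/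
lemma exists_grid_coordinate {S : Finset Pt} {par : Pt → Pt} {root : Pt} {L : ℝ} (i : Fin 2)
    (hL : 0 < L) (hroot : root ∈ S) (hpar : ∀ v ∈ S, par v ∈ S)
    (hsum : ∑ v ∈ S, dist v (par v) ≤ 2 * L) (hrad : ∀ v ∈ S, dist v root ≤ L)
    {K : ℕ} {d : ℕ → ℕ} (hd : ∀ k < K, 0 < d k ∧ d k ≤ 4 * (2 * S.card + 1)) :
    ∃ U : Pt → ℕ, (∀ v ∈ S, U v < 2 * (2 * S.card + 1)) ∧
      (∀ m : ℕ, ∃ t : ℝ, ∀ v ∈ S, (U v < m ↔ v i < t)) ∧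
      (∀ v ∈ S, ∀ w ∈ S, |v i - w i| ≤ L / S.card * (|(U v : ℝ) - U w| + 1)) ∧
      ∑ v ∈ S, ∑ k ∈ Finset.range K,
        (if U v / d k ≠ U (par v) / d k then (d k : ℝ) else 0) ≤ 15 * K * S.card := by
  have hn : (0 : ℝ) < S.card := by exact_mod_cast Finset.card_pos.mpr ⟨root, hroot⟩
  set n := S.card with hn_def
  set δ := L / n with hδ_def
  have hδ : 0 < δ := div_pos hL hn
  have hLδ : L = n * δ := by rw [hδ_def]; field_simp
  set g : Pt → ℝ := fun v => (v i - root i + L) / δ with hg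
  have hbd : ∀ v ∈ S, |v i - root i| ≤ L := fun v hv =>
    (abs_coord_sub_le_dist v root i).trans (hrad v hv)
  have hg0 : ∀ v ∈ S, 0 ≤ g v := fun v hv =>
    div_nonneg (by linarith [neg_le_of_abs_le (hbd v hv)]) hδ.le
  have hg2 : ∀ v ∈ S, g v ≤ 2 * n := fun v hv => by
    rw [hg, div_le_iff₀ hδ]
    linarith [le_of_abs_le (hbd v hv)]
  have hgsub : ∀ v w, |v i - w i| = δ * |g v - g w| := fun v w => by
    rw [hg, ← abs_of_pos hδ, ← abs_mul, abs_of_pos hδ]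
    congr 1
    field_simp
    ring
  obtain ⟨s, hs, hcost⟩ := exists_shift S (fun v => ⌊g v⌋₊) (fun v => ⌊g (par v)⌋₊)
    (N := 2 * n + 1) (Nat.succ_pos _) hd
  refine ⟨fun v => ⌊g v⌋₊ + s, fun v hv => ?_, fun m => ⟨(m - s) * δ + root i - L, fun v hv => ?_⟩,
    fun v hv w hw => ?_, hcost.trans ?_⟩
  · have : ⌊g v⌋₊ ≤ 2 * n := Nat.floor_le_of_le (by exact_mod_cast hg2 v hv)
    beta_reduce
    omega
  · beta_reduce
    rw [← Nat.floor_add_natCast (hg0 v hv), Nat.floor_lt (add_nonneg (hg0 v hv) s.cast_nonneg),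
      ← lt_sub_iff_add_lt, hg, div_lt_iff₀ hδ]
    constructor <;> intro h <;> linarith
  · rw [hgsub]
    push_cast
    rw [add_sub_add_right_eq_sub]
    exact mul_le_mul_of_nonneg_left (abs_sub_le_abs_floor_sub_add_one (hg0 v hv) (hg0 w hw)) hδ.le
  · have h : ∑ v ∈ S, |(⌊g v⌋₊ : ℝ) - ⌊g (par v)⌋₊| ≤ 3 * n := by
      calc _ ≤ ∑ v ∈ S, (dist v (par v) / δ + 1) := by
            refine Finset.sum_le_sum fun v hv => ?_
            refine (abs_floor_sub_le_abs_sub_add_one (hg0 v hv) (hg0 _ (hpar v hv))).trans ?_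
            rw [add_le_add_iff_right, le_div_iff₀ hδ, mul_comm, ← hgsub]
            exact abs_coord_sub_le_dist _ _ _
        _ = (∑ v ∈ S, dist v (par v)) / δ + n := by
            rw [Finset.sum_add_distrib, Finset.sum_div, Finset.sum_const, nsmul_eq_mul, mul_one]
        _ ≤ 2 * n + n := by
            rw [add_le_add_iff_right, div_le_iff₀ hδ]
            linarith
        _ = 3 * n := by ring
    calc _ ≤ 5 * (K : ℝ) * (3 * n) := mul_le_mul_of_nonneg_left h (by positivity)
      _ = _ := by ring

/-! ### The grid hierarchy -/

/-- Cell of `v` on level `k`: level `2 * j` consists of the `2 ^ j × 2 ^ j` squares, level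
`2 * j + 1` of the `2 ^ (j + 1) × 2 ^ j` rectangles. -/
def gridCell (U W : Pt → ℕ) (k : ℕ) (v : Pt) : ℕ × ℕ :=
  (U v / 2 ^ ((k + 1) / 2), W v / 2 ^ (k / 2))

lemma div_two_pow_eq_iff {j a u w : ℕ} (hu : u / 2 ^ (j + 1) = a) (hw : w / 2 ^ (j + 1) = a) :
    u / 2 ^ j = w / 2 ^ j ↔ (u < (2 * a + 1) * 2 ^ j ↔ w < (2 * a + 1) * 2 ^ j) := by
  have hpos : 0 < 2 ^ j := by positivity
  rw [pow_succ, ← Nat.div_div_eq_div_mul] at hu hw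
  rw [← Nat.div_lt_iff_lt_mul hpos, ← Nat.div_lt_iff_lt_mul hpos]
  omega

lemma abs_sub_add_one_le_of_div_eq {u w d : ℕ} (hd : 0 < d) (h : u / d = w / d) :
    |(u : ℝ) - w| + 1 ≤ d := by
  have h₁ := Nat.div_add_mod u d
  have h₂ := Nat.div_add_mod w d
  have h₃ := Nat.mod_lt u hd
  have h₄ := Nat.mod_lt w hd
  rw [h] at h₁
  have h₅ : u + 1 ≤ w + d := by omega
  have h₆ : w + 1 ≤ u + d := by omega
  have h₇ : (u : ℝ) + 1 ≤ w + d := by exact_mod_cast h₅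
  have h₈ : (w : ℝ) + 1 ≤ u + d := by exact_mod_cast h₆
  rcases abs_cases ((u : ℝ) - w) with h | h <;> linarith

lemma div_two_pow_eq_of_le {u w i j : ℕ} (hij : i ≤ j) (h : u / 2 ^ i = w / 2 ^ i) :
    u / 2 ^ j = w / 2 ^ j := by
  rw [← Nat.add_sub_cancel' hij, pow_add, ← Nat.div_div_eq_div_mul, ← Nat.div_div_eq_div_mul, h]

lemma gridCell_succ_eq {U W : Pt → ℕ} {k : ℕ} {v w : Pt}
    (h : gridCell U W k v = gridCell U W k w) :
    gridCell U W (k + 1) v = gridCell U W (k + 1) w := by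
  obtain ⟨h₁, h₂⟩ := Prod.ext_iff.mp h
  exact Prod.ext (div_two_pow_eq_of_le (Nat.div_le_div_right (k + 1).le_succ) h₁)
    (div_two_pow_eq_of_le (Nat.div_le_div_right k.le_succ) h₂)

lemma exists_planeConnected_of_grid {S : Finset Pt} {col : Pt → Bool}
    {par : Pt → Pt} {depth : Pt → ℕ} {root : Pt} {U W : Pt → ℕ} {δ : ℝ} {J : ℕ}
    (hgen : GenPos S) (hcol : TwoColored col S)
    (hpar : ∀ v ∈ S, par v ∈ S ∧ col (par v) ≠ col v)
    (hdepth : ∀ v ∈ S, v ≠ root → depth (par v) < depth v) (hδ : 0 ≤ δ)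
    (hU : ∀ v ∈ S, U v < 2 ^ J) (hW : ∀ v ∈ S, W v < 2 ^ J)
    (hUt : ∀ m : ℕ, ∃ t : ℝ, ∀ v ∈ S, (U v < m ↔ v 0 < t))
    (hWt : ∀ m : ℕ, ∃ t : ℝ, ∀ v ∈ S, (W v < m ↔ v 1 < t))
    (hUd : ∀ v ∈ S, ∀ w ∈ S, |v 0 - w 0| ≤ δ * (|(U v : ℝ) - U w| + 1))
    (hWd : ∀ v ∈ S, ∀ w ∈ S, |v 1 - w 1| ≤ δ * (|(W v : ℝ) - W w| + 1)) :
    ∃ E, PlaneConnected col S E ∧ totalLen E ≤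
      ∑ v ∈ S, cutCost (gridCell U W) par (fun k => 2 * δ * 2 ^ ((k + 1) / 2)) (2 * J) v := by
  have hpos : ∀ j, 0 < 2 ^ j := fun j => by positivity
  have htop : ∀ inst, @Finset.filter Pt (fun v => gridCell U W (2 * J) v = (0, 0)) inst S = S := by
    refine fun _ => Finset.filter_true_of_mem fun v hv => ?_
    have h₁ : (2 * J + 1) / 2 = J := by omega
    have h₂ : 2 * J / 2 = J := by omega
    rw [gridCell, h₁, h₂, Nat.div_eq_of_lt (hU v hv), Nat.div_eq_of_lt (hW v hv)]
  have main := exists_planeConnected_of_hierarchy (cell := gridCell U W)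
    (scale := fun k => 2 * δ * 2 ^ ((k + 1) / 2)) hgen hpar hdepth
    (fun _ _ _ => gridCell_succ_eq) ?_ ?_ (2 * J) (0, 0) (by rwa [htop])
  · rwa [htop] at main
  · intro k v hv w hw h
    obtain ⟨h₁, h₂⟩ := Prod.ext_iff.mp h
    have h₃ := abs_sub_add_one_le_of_div_eq (hpos _) h₁
    have h₄ := abs_sub_add_one_le_of_div_eq (hpos _) h₂
    have h₅ : (2 : ℝ) ^ (k / 2) ≤ 2 ^ ((k + 1) / 2) :=
      pow_le_pow_right₀ one_le_two (Nat.div_le_div_right k.le_succ)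
    push_cast at h₃ h₄
    calc dist v w ≤ |v 0 - w 0| + |v 1 - w 1| := dist_le_abs_add_abs v w
      _ ≤ δ * 2 ^ ((k + 1) / 2) + δ * 2 ^ ((k + 1) / 2) :=
          add_le_add ((hUd v hv w hw).trans (mul_le_mul_of_nonneg_left h₃ hδ))
            ((hWd v hv w hw).trans (mul_le_mul_of_nonneg_left (h₄.trans h₅) hδ))
      _ = _ := by ring
  · rintro k ⟨a, b⟩
    obtain ⟨j, rfl | rfl⟩ := k.even_or_odd'
    · have h₁ : (2 * j + 1) / 2 = j := by omega
      have h₂ : 2 * j / 2 = j := by omega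
      have h₃ : (2 * j + 1 + 1) / 2 = j + 1 := by omega
      obtain ⟨t, ht⟩ := hUt ((2 * a + 1) * 2 ^ j)
      refine ⟨1, 0, t, fun v hv w hw hcv hcw => ?_⟩
      simp only [gridCell, h₁, h₂, h₃, Prod.mk.injEq] at hcv hcw ⊢
      simp only [hcv.2, hcw.2, and_true, linForm, one_mul, zero_mul, add_zero, ← ht v hv,
        ← ht w hw]
      exact div_two_pow_eq_iff hcv.1 hcw.1
    · have h₁ : (2 * j + 1 + 1) / 2 = j + 1 := by omega
      have h₂ : (2 * j + 1) / 2 = j := by omega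
      have h₃ : (2 * j + 1 + 1 + 1) / 2 = j + 1 := by omega
      obtain ⟨t, ht⟩ := hWt ((2 * b + 1) * 2 ^ j)
      refine ⟨0, 1, t, fun v hv w hw hcv hcw => ?_⟩
      simp only [gridCell, h₁, h₂, h₃, Prod.mk.injEq] at hcv hcw ⊢
      simp only [hcv.1, hcw.1, true_and, linForm, one_mul, zero_mul, zero_add, ← ht v hv,
        ← ht w hw]
      exact div_two_pow_eq_iff hcv.2 hcw.2

lemma cutCost_gridCell_le (U W : Pt → ℕ) (par : Pt → Pt) {δ : ℝ} (hδ : 0 ≤ δ) (K : ℕ) (v : Pt) :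
    cutCost (gridCell U W) par (fun k => 2 * δ * 2 ^ ((k + 1) / 2)) K v ≤ 2 * δ + 4 * δ *
      (∑ k ∈ Finset.range K, (if U v / 2 ^ ((k + 1) / 2) ≠ U (par v) / 2 ^ ((k + 1) / 2) then
          ((2 ^ ((k + 1) / 2) : ℕ) : ℝ) else 0) +
        ∑ k ∈ Finset.range K, (if W v / 2 ^ (k / 2) ≠ W (par v) / 2 ^ (k / 2) then
          ((2 ^ (k / 2) : ℕ) : ℝ) else 0)) := by
  rw [cutCost, ← Finset.sum_add_distrib, Finset.mul_sum]
  refine add_le_add (by norm_num) (Finset.sum_le_sum fun k _ => ?_)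
  have h₁ : (k + 1 + 1) / 2 = k / 2 + 1 := by omega
  have h₂ : (2 : ℝ) ^ (k / 2) ≤ 2 ^ ((k + 1) / 2) :=
    pow_le_pow_right₀ one_le_two (Nat.div_le_div_right k.le_succ)
  have h₃ : (0 : ℝ) < 2 ^ (k / 2) := by positivity
  have h₄ : (0 : ℝ) < 2 ^ ((k + 1) / 2) := by positivity
  rw [h₁, pow_succ]
  push_cast
  by_cases hU : U v / 2 ^ ((k + 1) / 2) = U (par v) / 2 ^ ((k + 1) / 2) <;>
    by_cases hW : W v / 2 ^ (k / 2) = W (par v) / 2 ^ (k / 2) <;>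
    simp [gridCell, hU, hW] <;> nlinarith

lemma clog_le_add_logb {n : ℕ} (hn : 1 ≤ n) :
    2 ^ Nat.clog 2 (2 * (2 * n + 1)) ≤ 4 * (2 * n + 1) ∧
      (Nat.clog 2 (2 * (2 * n + 1)) : ℝ) ≤ 4 + Real.logb 2 n := by
  set J := Nat.clog 2 (2 * (2 * n + 1)) with hJ
  have hJ0 : 0 < J := Nat.clog_pos one_lt_two (by omega)
  have h₁ : 2 ^ J ≤ 4 * (2 * n + 1) := by
    have h := Nat.pow_pred_clog_lt_self one_lt_two (x := 2 * (2 * n + 1)) (by omega)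
    rw [← hJ] at h
    rw [← Nat.succ_pred_eq_of_pos hJ0, pow_succ]
    omega
  refine ⟨h₁, ?_⟩
  have hnR : (0 : ℝ) < n := by exact_mod_cast hn
  have h₂ : (2 : ℝ) ^ J ≤ 2 ^ 4 * n := by
    have : 2 ^ J ≤ 2 ^ 4 * n := h₁.trans (by omega)
    exact_mod_cast this
  have h₃ := Real.logb_le_logb_of_le one_lt_two (by positivity) h₂
  rwa [Real.logb_mul (by positivity) hnR.ne', Real.logb_pow, Real.logb_pow,
    Real.logb_self_eq_one one_lt_two, mul_one, mul_one, Nat.cast_ofNat] at h₃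

/-- There is a constant `C > 0` such that for every bicolored set
`S` of `n ≥ 2` points in general position with at least one red and one blue point,
there is a plane bichromatic spanning tree of `S` of total length at most
`C · (1 + log₂ n)` times the length of a minimum bichromatic spanning tree of `S`. -/
theorem exists_plane_bichromatic_spanning_tree_log_approx :
    ∃ C : ℝ, 0 < C ∧
      ∀ (S : Finset Pt) (col : Pt → Bool), GenPos S → 2 ≤ S.card →
        (∃ r ∈ S, col r = true) → (∃ b ∈ S, col b = false) →
        ∀ Tmin : SimpleGraph ↥S, IsMinBST col Tmin →
          ∃ T : SimpleGraph ↥S, IsBST col T ∧ PlaneGraph T ∧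
            graphLen T ≤ C * (1 + Real.logb 2 (S.card : ℝ)) * graphLen Tmin := by
  refine ⟨1000, by norm_num, fun S col hgen hS hred hblue Tmin hmin => ?_⟩
  obtain ⟨⟨htree, hbi⟩, -⟩ := hmin
  have hconn := htree.connected
  have hcol : TwoColored col S := ⟨hred, hblue⟩
  obtain ⟨root, hroot, hrcol⟩ := hred
  obtain ⟨b, hb, hbcol⟩ := hblue
  set L := graphLen Tmin
  set n := S.card with hn_def
  have hL : 0 < L := by
    refine lt_of_lt_of_le (dist_pos.mpr ?_) (dist_le_graphLen hconn ⟨root, hroot⟩ ⟨b, hb⟩)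
    rintro rfl
    rw [hrcol] at hbcol
    exact absurd hbcol (by decide)
  have hn : (0 : ℝ) < n := by exact_mod_cast two_pos.trans_le hS
  have hrad : ∀ v ∈ S, dist v root ≤ L := fun v hv =>
    dist_le_graphLen hconn ⟨v, hv⟩ ⟨root, hroot⟩
  obtain ⟨par, depth, hpar, hdepth, hsum⟩ := exists_parent_map hconn hbi hS ⟨root, hroot⟩
  obtain ⟨hJ, hJlog⟩ := clog_le_add_logb (n := n) (one_le_two.trans hS)
  have hJle := Nat.le_pow_clog one_lt_two (2 * (2 * n + 1))
  set J := Nat.clog 2 (2 * (2 * n + 1))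
  have hpow : ∀ j ≤ J, 0 < 2 ^ j ∧ 2 ^ j ≤ 4 * (2 * n + 1) := fun j hj =>
    ⟨by positivity, (Nat.pow_le_pow_right two_pos hj).trans hJ⟩
  obtain ⟨U, hUJ, hUt, hUd, hUcost⟩ := exists_grid_coordinate 0 hL hroot (fun v hv => (hpar v hv).1)
    hsum hrad (K := 2 * J) (d := fun k => 2 ^ ((k + 1) / 2)) fun k hk => hpow _ (by omega)
  obtain ⟨W, hWJ, hWt, hWd, hWcost⟩ := exists_grid_coordinate 1 hL hroot (fun v hv => (hpar v hv).1)
    hsum hrad (K := 2 * J) (d := fun k => 2 ^ (k / 2)) fun k hk => hpow _ (by omega)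
  have hδ : 0 ≤ L / n := by positivity
  obtain ⟨E, hE, hElen⟩ := exists_planeConnected_of_grid hgen hcol hpar hdepth hδ
    (fun v hv => (hUJ v hv).trans_le hJle) (fun v hv => (hWJ v hv).trans_le hJle) hUt hWt hUd hWd
  obtain ⟨T, hT, hplane, hlen⟩ := hE.exists_tree ⟨root, hroot⟩
  refine ⟨T, hT, hplane, hlen.trans (hElen.trans ?_)⟩
  calc _ ≤ ∑ v ∈ S, _ := Finset.sum_le_sum fun v _ => cutCost_gridCell_le U W par hδ (2 * J) v
    _ ≤ n * (2 * (L / n)) + 4 * (L / n) * (15 * (2 * J : ℕ) * n + 15 * (2 * J : ℕ) * n) := by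
        rw [Finset.sum_add_distrib, Finset.sum_const, nsmul_eq_mul, ← Finset.mul_sum,
          Finset.sum_add_distrib]
        gcongr
    _ = (2 + 240 * J) * L := by
        push_cast
        field_simp
        ring
    _ ≤ 1000 * (1 + Real.logb 2 n) * L := by
        refine mul_le_mul_of_nonneg_right ?_ hL.le
        have : 0 ≤ Real.logb 2 n :=
          Real.logb_nonneg one_lt_two (by exact_mod_cast one_le_two.trans hS)
        linarith
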